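/- arXiv:1310.0650 — 10 statements merged into one kernel-verified Lean document; each statement's English description precedes it below -/
import Mathlib

section
/- Let S be a finite alphabet and let L ⊆ S* be a factor-closed language (i.e., if w ∈ L and v is a factor of w, then v ∈ L). Then the winning set W(L) ⊆ {A,B}* is factor-closed. -/
/-!
Word games (Salo–Törmä, "Playing with Subshifts").
The players' alphabet is `Bool`: player `A` is `false`, player `B` is `true`
(so that the order `A < B` is the order `false < true` on `Bool`).
-/

/-- Auxiliary function for the play of a finite ordered word game: the word built so far
is accumulated in the second argument, and at each step the player indicated by the
turn order picks the next letter as a function of the word built so far. -/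
def playAux {S : Type*} (sA sB : List S → S) : List Bool → List S → List S
  | [], w => w
  | b :: rest, w => playAux sA sB rest (w ++ [(if b then sB else sA) w])

/-- The play of the finite ordered word game with turn order `a`,
where `A` uses strategy `sA` and `B` uses strategy `sB`. -/
def play {S : Type*} (sA sB : List S → S) (a : List Bool) : List S :=
  playAux sA sB a []

/-- The winning set `W(X)` of a target set `X` of finite words: the set of turn orders
for which `A` has a winning strategy. -/
def Wset {S : Type*} (X : Set (List S)) : Set (List Bool) :=
  { a | ∃ sA : List S → S, ∀ sB : List S → S, play sA sB a ∈ X }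

theorem playAux_append {S : Type*} (sA sB : List S → S) (p q : List Bool) (w : List S) :
    playAux sA sB (p ++ q) w = playAux sA sB q (playAux sA sB p w) := by
  induction p generalizing w with
  | nil => rfl
  | cons b p ih => exact ih _

theorem playAux_prefix {S : Type*} (sA sB : List S → S) (p : List Bool) (w : List S) :
    w <+: playAux sA sB p w := by
  induction p generalizing w with
  | nil => exact List.prefix_rfl
  | cons b p ih => exact (List.prefix_append _ _).trans (ih _)

theorem playAux_length {S : Type*} (sA sB : List S → S) (p : List Bool) (w : List S) :
    (playAux sA sB p w).length = w.length + p.length := by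
  induction p generalizing w with
  | nil => rfl
  | cons b p ih => simp only [playAux, ih, List.length_append, List.length_cons, List.length_nil]; omega

theorem playAux_congr {S : Type*} (sA sB sB' : List S → S) (p : List Bool) (w : List S)
    (h : ∀ v : List S, v.length < w.length + p.length → sB v = sB' v) :
    playAux sA sB p w = playAux sA sB' p w := by
  induction p generalizing w with
  | nil => rfl
  | cons b p ih =>
    simp only [playAux]
    have h1 : sB w = sB' w := h w (by simp)
    have h2 : (if b then sB else sA) w = (if b then sB' else sA) w := by
      cases b <;> simp [h1]
    rw [h2]
    apply ih
    intro v hv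
    apply h
    simp only [List.length_append, List.length_cons, List.length_nil] at hv ⊢
    omega

theorem playAux_shift {S : Type*} (sA sB sB' : List S → S) (u : List S)
    (h : ∀ w, sB' (u ++ w) = sB w) (p : List Bool) (w : List S) :
    playAux sA sB' p (u ++ w) = u ++ playAux (fun v => sA (u ++ v)) sB p w := by
  induction p generalizing w with
  | nil => rfl
  | cons b p ih =>
    simp only [playAux]
    rw [← ih, List.append_assoc]
    cases b <;> simp [h]

/-- If `L ⊆ S*` is factor-closed, then the winning set
`W(L) ⊆ {A,B}*` is factor-closed. -/
theorem winningSet_factorClosed {S : Type*} [Fintype S] [Nonempty S]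
    (L : Set (List S)) (hL : ∀ w ∈ L, ∀ v : List S, v <:+: w → v ∈ L) :
    ∀ a ∈ Wset L, ∀ b : List Bool, b <:+: a → b ∈ Wset L := by
  rintro a ⟨sA, hA⟩ b ⟨p, q, rfl⟩
  obtain ⟨c⟩ := ‹Nonempty S›
  let u := playAux sA (fun _ => c) p []
  have hu : u.length = p.length := by simp [u, playAux_length]
  refine ⟨fun v => sA (u ++ v), fun sB => ?_⟩
  let sB' : List S → S := fun w => if w.length < p.length then c else sB (w.drop p.length)
  have h1 : playAux sA sB' p [] = u := by
    apply playAux_congr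
    intro v hv
    have : v.length < p.length := by simpa using hv
    simp [sB', this]
  have h2 : ∀ w, sB' (u ++ w) = sB w := by
    intro w
    simp [sB', ← hu]
  have h3 := hA sB'
  have h4 := playAux_shift sA sB sB' u h2 b []
  rw [List.append_nil] at h4
  unfold play at h3 ⊢
  rw [playAux_append, playAux_append, h1, h4] at h3
  exact hL _ h3 _ ((List.suffix_append _ _).isInfix.trans (playAux_prefix _ _ _ _).isInfix)
end

section
/- Let S be a finite alphabet and let L ⊆ S* be a right extendable language (i.e., for every w ∈ L there exists c ∈ S with wc ∈ L). Then the winning set W(L) ⊆ {A,B}* is right extendable; more precisely, for every nonempty a ∈ W(L) one has aA ∈ W(L). -/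
theorem playAux_append_aux {S : Type*} (sA sB : List S → S) (a b : List Bool) (w : List S) :
    playAux sA sB (a ++ b) w = playAux sA sB b (playAux sA sB a w) := by
  induction a generalizing w with
  | nil => rfl
  | cons x a ih => exact ih _

theorem playAux_length_aux {S : Type*} (sA sB : List S → S) (a : List Bool) (w : List S) :
    (playAux sA sB a w).length = w.length + a.length := by
  induction a generalizing w with
  | nil => rfl
  | cons x a ih =>
    simp only [playAux, ih, List.length_append, List.length_cons, List.length_nil]
    omega

theorem playAux_congr_aux {S : Type*} (sA sA' sB : List S → S) (n : ℕ)
    (h : ∀ w : List S, w.length < n → sA' w = sA w) (a : List Bool) (w : List S)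
    (hn : w.length + a.length ≤ n) :
    playAux sA' sB a w = playAux sA sB a w := by
  induction a generalizing w with
  | nil => rfl
  | cons x a ih =>
    simp only [List.length_cons] at hn
    simp only [playAux]
    have hx : (if x then sB else sA') w = (if x then sB else sA) w := by
      cases x
      · exact h w (by omega)
      · rfl
    rw [hx]
    apply ih
    simp only [List.length_append, List.length_cons, List.length_nil]
    omega

/-- If `L ⊆ S*` is right extendable (every `w ∈ L` has `wc ∈ L` for
some letter `c`), then `W(L)` is right extendable: every nonempty `a ∈ W(L)`
satisfies `aA ∈ W(L)`. (Recall `A = false`.) -/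
theorem winningSet_rightExtendable {S : Type*} [Fintype S] [Nonempty S]
    (L : Set (List S)) (hL : ∀ w ∈ L, ∃ c : S, w ++ [c] ∈ L) :
    ∀ a ∈ Wset L, a ≠ [] → a ++ [false] ∈ Wset L := by
  classical
  rintro a ⟨sA, hA⟩ _
  choose! f hf using hL
  refine ⟨fun w => if w.length < a.length then sA w else f w, fun sB => ?_⟩
  have h1 := playAux_congr_aux sA (fun w => if w.length < a.length then sA w else f w) sB
    a.length (fun w hw => if_pos hw) a [] (by simp)
  have h2 := playAux_length_aux sA sB a []
  have h3 : playAux sA sB a [] ∈ L := hA sB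
  unfold play
  rw [playAux_append_aux, h1]
  have h4 : ¬ (playAux sA sB a []).length < a.length := by simp [h2]
  simp only [playAux, Bool.false_eq_true, if_false, if_neg h4]
  exact hf _ h3
end

section
/- Let X ⊆ S^ℕ be a one-directional subshift. Then a turn order a ∈ {A,B}^ℕ lies in the winning shift W(X) if and only if every finite prefix a_0⋯a_{n−1} lies in W(B(X)); consequently W(X) is itself a subshift of {A,B}^ℕ and its language satisfies B(W(X)) = W(B(X)). -/
/-- The prefix of length `n` of the play of the infinite ordered word game with
turn order `a : ℕ → Bool`. -/
def playPref {S : Type*} (sA sB : List S → S) (a : ℕ → Bool) : ℕ → List S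
  | 0 => []
  | n + 1 => playPref sA sB a n ++ [(if a n then sB else sA) (playPref sA sB a n)]

/-- The play of the infinite ordered word game: coordinate `i` is chosen by the player
`a i` as a function of the word `x_0 ⋯ x_{i-1}` built so far. -/
def playInf {S : Type*} (sA sB : List S → S) (a : ℕ → Bool) : ℕ → S :=
  fun i => (if a i then sB else sA) (playPref sA sB a i)

/-- The winning shift `W(X)` of a target set `X ⊆ S^ℕ`: the set of turn orders for
which `A` has a winning strategy in the infinite game. -/
def WShift {S : Type*} (X : Set (ℕ → S)) : Set (ℕ → Bool) :=
  { a | ∃ sA : List S → S, ∀ sB : List S → S, playInf sA sB a ∈ X }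

/-- The shift map on one-directional configurations. -/
def shiftN {S : Type*} (x : ℕ → S) : ℕ → S := fun i => x (i + 1)

/-- The language `B(X)` of a set of one-directional configurations: all finite words
occurring as factors of its elements. -/
def langN {S : Type*} (X : Set (ℕ → S)) : Set (List S) :=
  { w | ∃ x ∈ X, ∃ i : ℕ, w = List.ofFn fun j : Fin w.length => x (i + j.val) }

theorem aux_playAux_append {S : Type*} (sA sB : List S → S) (l₁ l₂ : List Bool) (w : List S) :
    playAux sA sB (l₁ ++ l₂) w = playAux sA sB l₂ (playAux sA sB l₁ w) := by
  induction l₁ generalizing w with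
  | nil => rfl
  | cons b l ih => simp only [List.cons_append, playAux]; exact ih _

theorem aux_play_ofFn {S : Type*} (sA sB : List S → S) (a : ℕ → Bool) (n : ℕ) :
    play sA sB (List.ofFn fun i : Fin n => a i.val) = playPref sA sB a n := by
  induction n with
  | zero => simp [play, playAux, playPref]
  | succ n ih =>
    rw [List.ofFn_succ_last]
    unfold play at *
    rw [aux_playAux_append]
    simp only [Fin.val_castSucc, Fin.val_last]
    rw [ih]
    rfl

theorem aux_pref_ofFn {S : Type*} (sA sB : List S → S) (a : ℕ → Bool) (n : ℕ) :
    playPref sA sB a n = List.ofFn fun i : Fin n => playInf sA sB a i.val := by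
  induction n with
  | zero => simp [playPref]
  | succ n ih =>
    rw [List.ofFn_succ_last]
    simp only [Fin.val_castSucc, Fin.val_last]
    rw [← ih]
    rfl

theorem aux_shift_iter {S : Type*} (X : Set (ℕ → S)) (hX : ∀ x ∈ X, shiftN x ∈ X)
    (i : ℕ) : ∀ x ∈ X, (fun j => x (i + j)) ∈ X := by
  induction i with
  | zero => intro x hx; simpa using hx
  | succ i ih =>
    intro x hx
    have h := hX _ (ih x hx)
    convert h using 1
    funext j
    simp only [shiftN]
    congr 1
    omega

theorem aux_lang_ofFn {S : Type*} (X : Set (ℕ → S)) (hX : ∀ x ∈ X, shiftN x ∈ X)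
    (n : ℕ) (y : ℕ → S) :
    (List.ofFn fun i : Fin n => y i.val) ∈ langN X ↔ ∃ x ∈ X, ∀ i < n, y i = x i := by
  constructor
  · rintro ⟨x, hx, i, h⟩
    refine ⟨_, aux_shift_iter X hX i x hx, fun j hj => ?_⟩
    have := congrArg (fun l : List S => l[j]?) h
    simpa [hj] using this
  · rintro ⟨x, hx, h⟩
    refine ⟨x, hx, 0, ?_⟩
    apply List.ext_getElem
    · simp
    · intro j h1 h2
      simp at h1
      simp [h j h1]

theorem aux_locConst {S : Type*} [TopologicalSpace S] [DiscreteTopology S]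
    (sB : List S → S) (a : ℕ → Bool) (n : ℕ) :
    IsLocallyConstant fun sA : List S → S => playPref sA sB a n := by
  rw [IsLocallyConstant.iff_eventually_eq]
  intro s
  induction n with
  | zero => simp [playPref]
  | succ n ih =>
    have h : ∀ᶠ t in nhds s, t (playPref s sB a n) = s (playPref s sB a n) := by
      have hc : Continuous fun t : List S → S => t (playPref s sB a n) := continuous_apply _
      exact hc.continuousAt.eventually (p := fun z => z = s (playPref s sB a n)) (by simp)
    filter_upwards [ih, h] with t h1 h2
    simp only [playPref, h1]
    split_ifs
    · rfl
    · rw [h2]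

theorem aux_char {S : Type*} [Fintype S] [Nonempty S]
    [TopologicalSpace S] [DiscreteTopology S]
    (X : Set (ℕ → S)) (hXcl : IsClosed X) (hXsh : ∀ x ∈ X, shiftN x ∈ X) (a : ℕ → Bool) :
    a ∈ WShift X ↔ ∀ n : ℕ, (List.ofFn fun i : Fin n => a i.val) ∈ Wset (langN X) := by
  constructor
  · rintro ⟨sA, h⟩ n
    refine ⟨sA, fun sB => ?_⟩
    rw [aux_play_ofFn, aux_pref_ofFn, aux_lang_ofFn X hXsh]
    exact ⟨_, h sB, fun _ _ => rfl⟩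
  · intro h
    let K : ℕ → Set (List S → S) := fun n => {sA | ∀ sB, playPref sA sB a n ∈ langN X}
    have hcl : ∀ n, IsClosed (K n) := by
      intro n
      have : K n = ⋂ sB, (fun sA => playPref sA sB a n) ⁻¹' (langN X) := by
        ext; simp [K]
      rw [this]
      exact isClosed_iInter fun sB => ⟨by rw [← Set.preimage_compl]; exact aux_locConst sB a n _⟩
    have hne : (⋂ n, K n).Nonempty := by
      apply IsCompact.nonempty_iInter_of_sequence_nonempty_isCompact_isClosed K
      · intro n sA hs sB
        have := hs sB
        rw [aux_pref_ofFn, aux_lang_ofFn X hXsh] at this ⊢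
        obtain ⟨x, hx, hh⟩ := this
        exact ⟨x, hx, fun i hi => hh i (by omega)⟩
      · intro n
        obtain ⟨sA, hs⟩ := h n
        refine ⟨sA, fun sB => ?_⟩
        rw [← aux_play_ofFn]
        exact hs sB
      · exact (hcl 0).isCompact
      · exact hcl
    obtain ⟨sA, hs⟩ := hne
    rw [Set.mem_iInter] at hs
    refine ⟨sA, fun sB => ?_⟩
    have hx : ∀ n, ∃ x ∈ X, ∀ i < n, playInf sA sB a i = x i := by
      intro n
      rw [← aux_lang_ofFn X hXsh, ← aux_pref_ofFn]
      exact hs n sB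
    choose x hxX hx using hx
    refine hXcl.mem_of_tendsto (f := x) (b := Filter.atTop) ?_ (Filter.Eventually.of_forall hxX)
    rw [tendsto_pi_nhds]
    intro i
    apply tendsto_const_nhds.congr'
    filter_upwards [Filter.eventually_gt_atTop i] with n hn
    exact hx n i hn

theorem aux_shift {S : Type*} [Nonempty S]
    (X : Set (ℕ → S)) (hXsh : ∀ x ∈ X, shiftN x ∈ X) :
    ∀ a ∈ WShift X, shiftN a ∈ WShift X := by
  classical
  rintro a ⟨sA, h⟩
  let c := sA []
  refine ⟨fun w => sA (c :: w), fun sB => ?_⟩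
  let sB' : List S → S := fun w => if w = [] then c else sB w.tail
  have hp : ∀ n, playPref sA sB' a (n + 1) =
      c :: playPref (fun w => sA (c :: w)) sB (shiftN a) n := by
    intro n
    induction n with
    | zero => cases h0 : a 0 <;> simp [playPref, sB', c, h0]
    | succ n ih =>
      rw [playPref, ih, playPref]
      have e : shiftN a n = a (n + 1) := rfl
      cases h0 : a (n + 1) <;> rw [h0] at e <;> simp [sB', e]
  have := hXsh _ (h sB')
  convert this using 1
  funext i
  have e : shiftN a i = a (i + 1) := rfl
  change _ = playInf sA sB' a (i + 1)
  unfold playInf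
  rw [hp]
  cases h0 : a (i + 1) <;> rw [h0] at e <;> simp [sB', e]

theorem aux_pref_length {S : Type*} (sA sB : List S → S) (a : ℕ → Bool) (n : ℕ) :
    (playPref sA sB a n).length = n := by
  rw [aux_pref_ofFn]; simp

theorem aux_extend {S : Type*} [Nonempty S]
    (X : Set (ℕ → S)) (hXsh : ∀ x ∈ X, shiftN x ∈ X) (w : List Bool)
    (hw : w ∈ Wset (langN X)) : (fun i => w.getD i false) ∈ WShift X := by
  classical
  set a : ℕ → Bool := fun i => w.getD i false with ha
  have hwa : w = List.ofFn fun i : Fin w.length => a i.val := by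
    apply List.ext_getElem
    · simp
    · intro j h1 h2
      simp [ha]
  obtain ⟨sA, hs⟩ := hw
  have hs' : ∀ sB, playPref sA sB a w.length ∈ langN X := by
    intro sB
    rw [← aux_play_ofFn, ← hwa]
    exact hs sB
  let ext : List S → ℕ → S := fun u =>
    if h : ∃ x ∈ X, u = List.ofFn fun i : Fin u.length => x i.val then h.choose
    else fun _ => Classical.arbitrary S
  let sA' : List S → S := fun u =>
    if u.length < w.length then sA u else ext (u.take w.length) u.length
  refine ⟨sA', fun sB => ?_⟩
  have hpe : ∀ n ≤ w.length, playPref sA' sB a n = playPref sA sB a n := by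
    intro n hn
    induction n with
    | zero => rfl
    | succ n ih =>
      have h1 : sA' (playPref sA sB a n) = sA (playPref sA sB a n) := by
        simp only [sA', aux_pref_length]
        rw [if_pos (by omega)]
      simp only [playPref, ih (by omega)]
      split_ifs
      · rfl
      · rw [h1]
  set p := playPref sA' sB a w.length with hp
  have hpl : p.length = w.length := aux_pref_length _ _ _ _
  have hpL : p ∈ langN X := by rw [hp, hpe _ le_rfl]; exact hs' sB
  have hex : ∃ x ∈ X, p = List.ofFn fun i : Fin p.length => x i.val := by
    obtain ⟨x, hx, i, h⟩ := hpL
    exact ⟨_, aux_shift_iter X hXsh i x hx, h⟩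
  have hX1 : ext p ∈ X := by
    simp only [ext]; rw [dif_pos hex]; exact hex.choose_spec.1
  have hX2 : p = List.ofFn fun i : Fin p.length => ext p i.val := by
    have := hex.choose_spec.2
    have e : ext p = hex.choose := by simp only [ext]; rw [dif_pos hex]
    rw [e]; exact this
  have : playInf sA' sB a = ext p := by
    funext i
    by_cases hi : i < w.length
    · have h1 : p = List.ofFn fun i : Fin w.length => playInf sA' sB a i.val :=
        aux_pref_ofFn _ _ _ _
      have h2 := congrArg (fun l : List S => l[i]?) (h1.symm.trans hX2)
      simpa [hi, hpl] using h2
    · have hai : a i = false := by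
        simp only [ha]
        exact List.getD_eq_default _ _ (by omega)
      have ht : (playPref sA' sB a i).take w.length = p := by
        rw [hp, aux_pref_ofFn, aux_pref_ofFn]
        apply List.ext_getElem
        · simp; omega
        · intro j h1 h2
          simp
      have h1 : playInf sA' sB a i = sA' (playPref sA' sB a i) := by
        simp [playInf, hai]
      have h2 : ∀ u : List S, u.length = i → u.take w.length = p → sA' u = ext p i := by
        intro u hu1 hu2
        simp only [sA', hu1, hu2]
        rw [if_neg hi]
      rw [h1]
      exact h2 _ (aux_pref_length _ _ _ _) ht
  rw [this]
  exact hX1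

/-- For a one-directional subshift `X ⊆ S^ℕ`, a turn order
`a ∈ {A,B}^ℕ` lies in the winning shift `W(X)` iff all of its finite prefixes lie in
`W(B(X))`; consequently `W(X)` is itself a subshift and `B(W(X)) = W(B(X))`. -/
theorem winningShift_prefix_characterization {S : Type*} [Fintype S] [Nonempty S]
    [TopologicalSpace S] [DiscreteTopology S]
    (X : Set (ℕ → S)) (hXcl : IsClosed X) (hXsh : ∀ x ∈ X, shiftN x ∈ X) :
    (∀ a : ℕ → Bool, a ∈ WShift X ↔
        ∀ n : ℕ, (List.ofFn fun i : Fin n => a i.val) ∈ Wset (langN X)) ∧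
      IsClosed (WShift X) ∧ (∀ a ∈ WShift X, shiftN a ∈ WShift X) ∧
      langN (WShift X) = Wset (langN X) := by
  have hc := aux_char X hXcl hXsh
  refine ⟨hc, ?_, aux_shift X hXsh, ?_⟩
  · have : WShift X = ⋂ n : ℕ, (fun a : ℕ → Bool => fun i : Fin n => a i.val) ⁻¹'
        {v | List.ofFn v ∈ Wset (langN X)} := by
      ext a
      rw [hc]; simp
    rw [this]
    exact isClosed_iInter fun n => (isClosed_discrete _).preimage (by fun_prop)
  · ext w
    constructor
    · rintro ⟨a, ha, i, h⟩
      have h1 := aux_shift_iter _ (aux_shift X hXsh) i a ha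
      rw [h]
      exact (hc _).1 h1 _
    · intro hw
      refine ⟨_, aux_extend X hXsh w hw, 0, ?_⟩
      apply List.ext_getElem
      · simp
      · intro j h1 h2
        simp
end

section
/- Let S be a finite alphabet and let L ⊆ S* be a regular language. Then the winning set W(L) ⊆ {A,B}* is a regular language. -/
/-- One backwards step: the states from which `A` can reach `V` (`A` moves if `b` is false). -/
def wgStep {S σ : Type*} (M : DFA S σ) (b : Bool) (V : Set σ) : Set σ :=
  {q | if b then ∀ s, M.step q s ∈ V else ∃ s, M.step q s ∈ V}

/-- The states from which `A` wins the game with a given remaining turn order. -/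
def wgWin {S σ : Type*} (M : DFA S σ) (a : List Bool) : Set σ :=
  a.foldr (wgStep M) M.accept

/-- `A` has a strategy preserving the winning region. -/
theorem wg_A {S σ : Type*} (M : DFA S σ) (a : List Bool) (sA sB : List S → S)
    (hA : ∀ u, (∃ s, M.step (M.eval u) s ∈ wgWin M (a.drop (u.length + 1))) →
      M.step (M.eval u) (sA u) ∈ wgWin M (a.drop (u.length + 1)))
    (b : List Bool) : ∀ w : List S, b = a.drop w.length → M.eval w ∈ wgWin M b →
      M.eval (playAux sA sB b w) ∈ M.accept := by
  induction b with
  | nil => intro w _ h; exact h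
  | cons c r ih =>
    intro w hb h
    have hr : r = a.drop (w.length + 1) := by
      rw [← List.drop_drop, ← hb]; rfl
    rw [playAux]
    apply ih
    · simpa using hr
    · rw [DFA.eval_append_singleton]
      cases c with
      | false =>
        have h' : ∃ s, M.step (M.eval w) s ∈ wgWin M r := by
          simpa [wgWin, wgStep] using h
        rw [hr] at h' ⊢
        exact hA w h'
      | true =>
        have h' : ∀ s, M.step (M.eval w) s ∈ wgWin M r := by
          simpa [wgWin, wgStep] using h
        exact h' _

/-- `B` has a strategy preserving the losing region. -/
theorem wg_B {S σ : Type*} (M : DFA S σ) (a : List Bool) (sA sB : List S → S)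
    (hB : ∀ u, (∃ s, M.step (M.eval u) s ∉ wgWin M (a.drop (u.length + 1))) →
      M.step (M.eval u) (sB u) ∉ wgWin M (a.drop (u.length + 1)))
    (b : List Bool) : ∀ w : List S, b = a.drop w.length → M.eval w ∉ wgWin M b →
      M.eval (playAux sA sB b w) ∉ M.accept := by
  induction b with
  | nil => intro w _ h; exact h
  | cons c r ih =>
    intro w hb h
    have hr : r = a.drop (w.length + 1) := by
      rw [← List.drop_drop, ← hb]; rfl
    rw [playAux]
    apply ih
    · simpa using hr
    · rw [DFA.eval_append_singleton]
      cases c with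
      | true =>
        have h' : ∃ s, M.step (M.eval w) s ∉ wgWin M r := by
          simpa [wgWin, wgStep] using h
        rw [hr] at h' ⊢
        exact hB w h'
      | false =>
        have h' : ∀ s, M.step (M.eval w) s ∉ wgWin M r := by
          simpa [wgWin, wgStep] using h
        exact h' _

theorem wg_iff {S σ : Type*} [Nonempty S] (M : DFA S σ) (a : List Bool) :
    a ∈ Wset (M.accepts : Set (List S)) ↔ M.start ∈ wgWin M a := by
  have key : ∀ P : List S → S → Prop, ∃ f : List S → S, ∀ u, (∃ s, P u s) → P u (f u) := by
    intro P
    have : ∀ u, ∃ t, (∃ s, P u s) → P u t := by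
      intro u
      by_cases h : ∃ s, P u s
      · exact ⟨h.choose, fun _ => h.choose_spec⟩
      · exact ⟨Classical.arbitrary S, fun h' => absurd h' h⟩
    choose f hf using this
    exact ⟨f, hf⟩
  constructor
  · rintro ⟨sA, h⟩
    by_contra hn
    obtain ⟨sB, hB⟩ := key fun u s => M.step (M.eval u) s ∉ wgWin M (a.drop (u.length + 1))
    exact wg_B M a sA sB hB a [] rfl hn (h sB)
  · intro h
    obtain ⟨sA, hA⟩ := key fun u s => M.step (M.eval u) s ∈ wgWin M (a.drop (u.length + 1))
    exact ⟨sA, fun sB => wg_A M a sA sB hA a [] rfl h⟩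

/-- If `L ⊆ S*` is a regular language, then the winning set
`W(L) ⊆ {A,B}*` is a regular language. -/
theorem winningSet_regular {S : Type*} [Fintype S] [Nonempty S]
    (L : Language S) (hL : L.IsRegular) :
    Language.IsRegular (Wset (L : Set (List S)) : Language Bool) := by
  classical
  obtain ⟨σ, _, M, rfl⟩ := hL
  apply Language.IsRegular.of_reverse
  rw [Language.isRegular_iff]
  refine ⟨Set σ, inferInstance, ⟨fun V b => wgStep M b V, M.accept, {V | M.start ∈ V}⟩, ?_⟩
  ext a
  refine Iff.trans ?_ (Iff.trans (wg_iff M a.reverse).symm Language.mem_reverse.symm)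
  simp [DFA.mem_accepts, DFA.eval, DFA.evalFrom, wgWin, List.foldr_reverse]
end

section
/- Let X ⊆ {A,B}^ℕ be a one-directional subshift over the two-letter alphabet {A,B}, ordered by A < B, which is downward closed (if x ∈ X and y ∈ {A,B}^ℕ satisfies y_i ≤ x_i for all i, then y ∈ X). Then W(X) = X. -/
/-- If `X ⊆ {A,B}^ℕ` is a downward closed one-directional subshift
over the two-letter alphabet `{A,B}` (with `A = false < true = B`), then `W(X) = X`. -/
theorem winningShift_of_downwardClosed (X : Set (ℕ → Bool))
    (hXcl : IsClosed X) (hXsh : ∀ x ∈ X, shiftN x ∈ X)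
    (hdown : ∀ x ∈ X, ∀ y : ℕ → Bool, (∀ i, y i ≤ x i) → y ∈ X) :
    WShift X = X := by
  ext a
  constructor
  · rintro ⟨sA, h⟩
    refine hdown _ (h fun _ => true) a fun i => ?_
    unfold playInf
    cases a i <;> simp
  · intro ha
    refine ⟨fun _ => false, fun sB => hdown a ha _ fun i => ?_⟩
    unfold playInf
    cases a i <;> simp
end

section
/- Let X ⊆ S^ℕ and Y ⊆ R^ℕ be one-directional subshifts over finite alphabets S and R, and let X × Y ⊆ (S × R)^ℕ denote the product subshift {z : (i ↦ z_i.1) ∈ X and (i ↦ z_i.2) ∈ Y}. Then W(X × Y) = W(X) ∩ W(Y). -/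
theorem mem_WShift_iff {S : Type*} (X : Set (ℕ → S)) (a : ℕ → Bool) :
    a ∈ WShift X ↔ ∃ s : List S → S, ∀ z : ℕ → S,
      (∀ i, a i = false → z i = s ((List.range i).map z)) → z ∈ X := by
  have pref : ∀ (s t : List S → S) (i : ℕ),
      playPref s t a i = (List.range i).map (playInf s t a) := by
    intro s t i
    induction i with
    | zero => rfl
    | succ n ih =>
      rw [List.range_succ, List.map_append, ← ih]
      rfl
  constructor
  · rintro ⟨s, hs⟩
    refine ⟨s, fun z hz => ?_⟩
    let t : List S → S := fun w => z w.length
    have key : ∀ i, playPref s t a i = (List.range i).map z := by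
      intro i
      induction i with
      | zero => rfl
      | succ n ih =>
        rw [List.range_succ, List.map_append, ← ih, playPref]
        cases h : a n
        · simp [hz n h, ih]
        · simp [t, ih]
    have e : playInf s t a = z := by
      funext i
      rw [playInf, key]
      cases h : a i
      · simp [← hz i h]
      · simp [t]
    exact e ▸ hs t
  · rintro ⟨s, hs⟩
    refine ⟨s, fun t => hs _ fun i hi => ?_⟩
    rw [← pref, playInf]
    simp [hi]

theorem WShift_proj {T S : Type*} (p : T → S) (c : S → T → T)
    (hc : ∀ x t, p (c x t) = x) (hp : ∀ t, c (p t) t = t)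
    (Z : Set (ℕ → T)) (X : Set (ℕ → S)) (hZ : ∀ z ∈ Z, (fun i => p (z i)) ∈ X)
    (a : ℕ → Bool) (ha : a ∈ WShift Z) : a ∈ WShift X := by
  rw [mem_WShift_iff] at ha ⊢
  obtain ⟨s, hs⟩ := ha
  let L : List S → List T := fun w => w.foldl (fun acc x => acc ++ [c x (s acc)]) []
  refine ⟨fun w => p (s (L w)), fun x hx => ?_⟩
  let z : ℕ → T := fun i => c (x i) (s (L ((List.range i).map x)))
  have key : ∀ i, (List.range i).map z = L ((List.range i).map x) := by
    intro i
    induction i with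
    | zero => rfl
    | succ n ih =>
      rw [List.range_succ, List.map_append, ih]
      simp [L, z, List.foldl_append]
  have h := hZ z (hs z fun i hi => by
    rw [key]
    simp only [z]
    rw [hx i hi, hp])
  simpa [z, hc] using h

/-- For one-directional subshifts `X ⊆ S^ℕ` and `Y ⊆ R^ℕ`,
the winning shift of the product subshift `X × Y ⊆ (S × R)^ℕ` is
`W(X × Y) = W(X) ∩ W(Y)`. -/
theorem winningShift_prod {S R : Type*} [Fintype S] [Nonempty S] [Fintype R] [Nonempty R]
    [TopologicalSpace S] [DiscreteTopology S] [TopologicalSpace R] [DiscreteTopology R]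
    (X : Set (ℕ → S)) (Y : Set (ℕ → R))
    (hXcl : IsClosed X) (hXsh : ∀ x ∈ X, shiftN x ∈ X)
    (hYcl : IsClosed Y) (hYsh : ∀ y ∈ Y, shiftN y ∈ Y) :
    WShift {z : ℕ → S × R | (fun i => (z i).1) ∈ X ∧ (fun i => (z i).2) ∈ Y} =
      WShift X ∩ WShift Y := by
  ext a
  constructor
  · intro ha
    exact ⟨WShift_proj Prod.fst (fun x t => (x, t.2)) (fun _ _ => rfl) (fun _ => rfl)
        _ X (fun z hz => hz.1) a ha,
      WShift_proj Prod.snd (fun x t => (t.1, x)) (fun _ _ => rfl) (fun _ => rfl)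
        _ Y (fun z hz => hz.2) a ha⟩
  · rintro ⟨hX, hY⟩
    rw [mem_WShift_iff] at hX hY ⊢
    obtain ⟨s, hs⟩ := hX
    obtain ⟨t, ht⟩ := hY
    refine ⟨fun w => (s (w.map Prod.fst), t (w.map Prod.snd)), fun z hz => ⟨?_, ?_⟩⟩
    · refine hs _ fun i hi => ?_
      rw [hz i hi]
      simp only [List.map_map]
      rfl
    · refine ht _ fun i hi => ?_
      rw [hz i hi]
      simp only [List.map_map]
      rfl
end

section
/- Let X ⊆ S^ℤ be a two-directional subshift of finite type (there is a finite set F of forbidden words such that X consists exactly of the configurations in which no word of F occurs). If X is mixing (for all u,w ∈ B(X) there exists N such that for all n ≥ N there is v ∈ S^n with uvw ∈ B(X)), then the winning shift W(X) is mixing. If X is transitive (for all u,w ∈ B(X) there exists v ∈ S* with uvw ∈ B(X)), then W(X) is transitive. -/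
/-- The shift map on two-directional configurations. -/
def shiftZ {S : Type*} (x : ℤ → S) : ℤ → S := fun i => x (i + 1)

/-- `occursZ w x` means that the finite word `w` occurs as a factor of the
two-directional configuration `x`. -/
def occursZ {S : Type*} (w : List S) (x : ℤ → S) : Prop :=
  ∃ i : ℤ, w = List.ofFn fun j : Fin w.length => x (i + j.val)

/-- The language `B(X)` of a set of two-directional configurations. -/
def langZ {S : Type*} (X : Set (ℤ → S)) : Set (List S) :=
  { w | ∃ x ∈ X, occursZ w x }

/-- The winning shift of a two-directional subshift `X`: all configurations in
`{A,B}^ℤ` whose every finite factor lies in the winning set `W(B(X))`. -/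
def WShiftZ {S : Type*} (X : Set (ℤ → S)) : Set (ℤ → Bool) :=
  { a | ∀ w : List Bool, occursZ w a → w ∈ Wset (langZ X) }

/-- A language is mixing if any two of its words can be glued with a connecting word
of any sufficiently large length. -/
def MixingLang {S : Type*} (L : Set (List S)) : Prop :=
  ∀ u ∈ L, ∀ w ∈ L, ∃ N : ℕ, ∀ n ≥ N, ∃ v : List S, v.length = n ∧ u ++ v ++ w ∈ L

/-- A language is transitive if any two of its words can be glued with some
connecting word. -/
def TransitiveLang {S : Type*} (L : Set (List S)) : Prop :=
  ∀ u ∈ L, ∀ w ∈ L, ∃ v : List S, u ++ v ++ w ∈ L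

namespace WG

variable {S : Type*}

/-- `Win T p a`: player `A` can force the final word into `T`, starting at `p`. -/
def Win (T : Set (List S)) : List S → List Bool → Prop
  | p, [] => p ∈ T
  | p, b :: a => if b then ∀ s, Win T (p ++ [s]) a else ∃ s, Win T (p ++ [s]) a

lemma win_append (T : Set (List S)) (a b : List Bool) (p : List S) :
    Win T p (a ++ b) ↔ Win {q | Win T q b} p a := by
  induction a generalizing p with
  | nil => simp [Win]
  | cons c a ih => cases c <;> simp [Win, ih]

lemma win_mono {T T' : Set (List S)} (a : List Bool) (p : List S)
    (h : ∀ y : List S, y.length = a.length → p ++ y ∈ T → p ++ y ∈ T') (hw : Win T p a) :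
    Win T' p a := by
  induction a generalizing p with
  | nil => simpa [Win] using h [] rfl (by simpa [Win] using hw)
  | cons c a ih =>
    have key : ∀ s, Win T (p ++ [s]) a → Win T' (p ++ [s]) a := by
      intro s hs
      refine ih _ ?_ hs
      intro y hy hT
      have := h (s :: y) (by simp [hy]) (by simpa using hT)
      simpa using this
    cases c
    · simp only [Win] at hw ⊢
      obtain ⟨s, hs⟩ := hw
      exact ⟨s, key s hs⟩
    · simp only [Win] at hw ⊢
      exact fun s => key s (hw s)

lemma win_shift (T : Set (List S)) (z p : List S) (a : List Bool) :
    Win T (z ++ p) a ↔ Win {q | z ++ q ∈ T} p a := by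
  induction a generalizing p with
  | nil => simp [Win]
  | cons c a ih => cases c <;> simp [Win, ← ih]

lemma win_replicate (T : Set (List S)) (n : ℕ) (p : List S) :
    Win T p (List.replicate n false) ↔ ∃ v : List S, v.length = n ∧ p ++ v ∈ T := by
  induction n generalizing p with
  | zero => simp [Win]
  | succ n ih =>
    simp only [List.replicate_succ, Win, ih]
    constructor
    · rintro ⟨s, v, hv, h⟩
      exact ⟨s :: v, by simp [hv], by simpa using h⟩
    · rintro ⟨v, hv, h⟩
      cases v with
      | nil => simp at hv
      | cons s v => exact ⟨s, v, by simpa using hv, by simpa using h⟩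

lemma win_lower [Nonempty S] (T : Set (List S)) (a : List Bool) (p : List S)
    (h : Win T p a) : Win T p (List.replicate a.length false) := by
  induction a generalizing p with
  | nil => simpa using h
  | cons c a ih =>
    obtain ⟨s0⟩ := ‹Nonempty S›
    cases c
    · simp only [Win] at h
      obtain ⟨s, hs⟩ := h
      simp only [List.length_cons, List.replicate_succ, Win]
      exact ⟨s, ih _ hs⟩
    · simp only [Win] at h
      simp only [List.length_cons, List.replicate_succ, Win]
      exact ⟨s0, ih _ (h s0)⟩

lemma win_of_strat (T : Set (List S)) (sA : List S → S) (a : List Bool) (p : List S)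
    (h : ∀ sB, playAux sA sB a p ∈ T) : Win T p a := by
  classical
  induction a generalizing p with
  | nil => exact h sA
  | cons c a ih =>
    cases c
    · simp only [Win]
      exact ⟨sA p, ih _ fun sB => by simpa [playAux] using h sB⟩
    · simp only [Win]
      intro s
      refine ih _ fun sB => ?_
      have h1 := h (fun w => if w.length = p.length then s else sB w)
      simp only [playAux, if_true] at h1
      have : ∀ (a : List Bool) (q : List S), p.length < q.length →
          playAux sA (fun w => if w.length = p.length then s else sB w) a q
            = playAux sA sB a q := by
        intro a
        induction a with
        | nil => intro q _; rfl
        | cons c a ih =>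
          intro q hq
          have hne : ¬ q.length = p.length := by omega
          simp only [playAux]
          rw [ih _ (by simp; omega)]
          cases c <;> simp [hne]
      rw [this _ _ (by simp)] at h1
      exact h1

lemma strat_of_win [Nonempty S] (T : Set (List S)) (a : List Bool) (h : Win T [] a) :
    ∃ sA : List S → S, ∀ sB : List S → S, play sA sB a ∈ T := by
  classical
  obtain ⟨s0⟩ := ‹Nonempty S›
  let sA : List S → S := fun w =>
    if h : ∃ s, Win T (w ++ [s]) (a.drop (w.length + 1)) then h.choose else s0
  refine ⟨sA, fun sB => ?_⟩
  have : ∀ (r : List Bool) (p : List S), r = a.drop p.length → Win T p r →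
      playAux sA sB r p ∈ T := by
    intro r
    induction r with
    | nil => intro p _ h; exact h
    | cons c r ih =>
      intro p hp hw
      have hr : r = a.drop (p.length + 1) := by
        rw [← List.tail_drop, ← hp]; rfl
      simp only [playAux]
      refine ih _ (by simpa using hr) ?_
      cases c
      · simp only [Win] at hw
        have hw' : ∃ s, Win T (p ++ [s]) (a.drop (p.length + 1)) := by
          rw [← hr]; simpa using hw
        have e : sA p = hw'.choose := dif_pos hw'
        have := hw'.choose_spec
        rw [← e, ← hr] at this
        simpa using this
      · simp only [Win, if_true] at hw ⊢
        exact hw _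
  exact this a [] (by simp) h

lemma mem_Wset [Nonempty S] (T : Set (List S)) (a : List Bool) :
    a ∈ Wset T ↔ Win T [] a :=
  ⟨fun ⟨sA, h⟩ => win_of_strat T sA a [] h, strat_of_win T a⟩

/-- The factor of `x` of length `n` at position `i`. -/
def seg (x : ℤ → S) (i : ℤ) (n : ℕ) : List S := List.ofFn fun j : Fin n => x (i + j.val)

@[simp] lemma seg_length (x : ℤ → S) (i : ℤ) (n : ℕ) : (seg x i n).length = n := by simp [seg]

lemma seg_add (x : ℤ → S) (i : ℤ) (m n : ℕ) :
    seg x i (m + n) = seg x i m ++ seg x (i + m) n := by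
  simp [seg, List.ofFn_add, add_assoc]

lemma seg_congr {x y : ℤ → S} {i j : ℤ} {n : ℕ} (h : ∀ t : ℕ, t < n → x (i + t) = y (j + t)) :
    seg x i n = seg y j n := by
  unfold seg
  congr 1
  funext t
  exact h t t.2

lemma occurs_iff (w : List S) (x : ℤ → S) : occursZ w x ↔ ∃ i, seg x i w.length = w :=
  ⟨fun ⟨i, h⟩ => ⟨i, h.symm⟩, fun ⟨i, h⟩ => ⟨i, h.symm⟩⟩

lemma occurs_seg (x : ℤ → S) (i : ℤ) (n : ℕ) : occursZ (seg x i n) x :=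
  (occurs_iff _ _).2 ⟨i, by simp⟩

lemma seg_split {x : ℤ → S} {i : ℤ} {u v : List S} (h : seg x i (u ++ v).length = u ++ v) :
    seg x i u.length = u ∧ seg x (i + u.length) v.length = v := by
  rw [List.length_append, seg_add] at h
  exact List.append_inj h (by simp)

variable {X : Set (ℤ → S)}

lemma mem_lang {w : List S} : w ∈ langZ X ↔ ∃ x ∈ X, ∃ i, seg x i w.length = w := by
  simp [langZ, occurs_iff]

lemma lang_left {u v : List S} (h : u ++ v ∈ langZ X) : u ∈ langZ X := by
  obtain ⟨x, hx, i, h⟩ := mem_lang.1 h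
  exact mem_lang.2 ⟨x, hx, i, (seg_split h).1⟩

lemma lang_right {u v : List S} (h : u ++ v ∈ langZ X) : v ∈ langZ X := by
  obtain ⟨x, hx, i, h⟩ := mem_lang.1 h
  exact mem_lang.2 ⟨x, hx, _, (seg_split h).2⟩

lemma lang_seg {x : ℤ → S} (hx : x ∈ X) (i : ℤ) (n : ℕ) : seg x i n ∈ langZ X :=
  ⟨x, hx, occurs_seg x i n⟩

lemma lang_ext_right {u : List S} (h : u ∈ langZ X) (n : ℕ) :
    ∃ v : List S, v.length = n ∧ u ++ v ∈ langZ X := by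
  obtain ⟨x, hx, i, h⟩ := mem_lang.1 h
  refine ⟨seg x (i + u.length) n, by simp, ?_⟩
  have := lang_seg hx i (u.length + n)
  rwa [seg_add, h] at this

lemma lang_ext_left {u : List S} (h : u ∈ langZ X) (n : ℕ) :
    ∃ v : List S, v.length = n ∧ v ++ u ∈ langZ X := by
  obtain ⟨x, hx, i, h⟩ := mem_lang.1 h
  refine ⟨seg x (i - n) n, by simp, ?_⟩
  have := lang_seg hx (i - n) (n + u.length)
  rwa [seg_add, sub_add_cancel, h] at this

/-- Gluing property with window `k`. -/
def Glue (L : Set (List S)) (k : ℕ) : Prop :=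
  ∀ x p y : List S, k ≤ p.length → x ++ p ∈ L → p ++ y ∈ L → x ++ p ++ y ∈ L

lemma glue_of_sft (F : Set (List S)) (hF : F.Finite)
    (hX : X = { x : ℤ → S | ∀ w ∈ F, ¬ occursZ w x }) : ∃ k, Glue (langZ X) k := by
  obtain ⟨k, hk⟩ : ∃ k, ∀ w ∈ F, w.length ≤ k := by
    obtain ⟨k, hk⟩ := (hF.image List.length).bddAbove
    exact ⟨k, fun w hw => hk ⟨w, hw, rfl⟩⟩
  refine ⟨k, fun x p y hp h1 h2 => ?_⟩
  obtain ⟨c, hc, i, h1⟩ := mem_lang.1 h1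
  obtain ⟨d, hd, j, h2⟩ := mem_lang.1 h2
  obtain ⟨hx, hpc⟩ := seg_split h1
  obtain ⟨hpd, hy⟩ := seg_split h2
  have hcd : ∀ t : ℕ, t < p.length → c (i + x.length + t) = d (j + t) := by
    intro t ht
    have h := hpc.trans hpd.symm
    unfold seg at h
    exact congrFun (List.ofFn_injective h) ⟨t, ht⟩
  let e : ℤ → S := fun z => if z < i + x.length + p.length then c z else d (z - (i + x.length) + j)
  have he : ∀ z, i + x.length ≤ z → e z = d (z - (i + x.length) + j) := by
    intro z hz
    by_cases h : z < i + x.length + p.length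
    · have := hcd (z - (i + x.length)).toNat (by omega)
      simp only [e, if_pos h]
      convert this using 2 <;> omega
    · simp [e, h]
  have he' : ∀ z, z < i + x.length + p.length → e z = c z := fun z hz => if_pos hz
  have heX : e ∈ X := by
    rw [hX] at hc hd ⊢
    intro w hw hocc
    obtain ⟨z, hz⟩ := (occurs_iff _ _).1 hocc
    have := hk w hw
    by_cases h : z + w.length ≤ i + x.length + p.length
    · refine hc w hw ((occurs_iff _ _).2 ⟨z, ?_⟩)
      rw [← seg_congr (x := e) (i := z), hz]
      intro t ht
      exact he' _ (by omega)
    · refine hd w hw ((occurs_iff _ _).2 ⟨z - (i + x.length) + j, ?_⟩)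
      rw [← seg_congr (x := e) (i := z), hz]
      intro t ht
      rw [he _ (by omega)]
      congr 1; omega
  refine mem_lang.2 ⟨e, heX, i, ?_⟩
  rw [List.length_append, seg_add, List.length_append]
  congr 1
  · rw [← List.length_append]
    refine Eq.trans (seg_congr fun t ht => he' _ ?_) h1
    rw [List.length_append] at ht; omega
  · refine Eq.trans (seg_congr fun t ht => ?_) hy
    rw [he _ (by push_cast; omega)]
    congr 1; push_cast; omega

variable [Nonempty S]

lemma win_exists {T : Set (List S)} {p : List S} {a : List Bool} (h : Win T p a) :
    ∃ v, p ++ v ∈ T := by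
  obtain ⟨v, -, hv⟩ := (win_replicate _ _ _).1 (win_lower _ _ _ h)
  exact ⟨v, hv⟩

lemma win_factor {s w t : List Bool} (h : Win (langZ X) [] (s ++ w ++ t)) :
    Win (langZ X) [] w := by
  rw [List.append_assoc, win_append] at h
  obtain ⟨q, hq⟩ := win_exists h
  simp only [List.nil_append, Set.mem_setOf_eq] at hq
  rw [win_append, ← List.append_nil q, win_shift] at hq
  refine win_mono _ _ ?_ hq
  intro y _ hy
  obtain ⟨v, hv⟩ := win_exists hy
  exact lang_right (lang_left hv)

lemma win_of_mem {u : List Bool} (hu : u ∈ langZ (WShiftZ X)) (k : ℕ) :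
    Win (langZ X) [] (List.replicate k false ++ u) := by
  obtain ⟨a, ha, i, hi⟩ := mem_lang.1 hu
  have h := (mem_Wset _ _).1 (ha _ (occurs_seg a (i - k) (k + u.length)))
  rw [seg_add, sub_add_cancel, hi, win_append] at h
  have := win_lower _ _ _ h
  rw [seg_length] at this
  rwa [win_append]

lemma mem_of_win {u : List Bool}
    (hu : ∀ k, Win (langZ X) [] (List.replicate k false ++ u)) : u ∈ langZ (WShiftZ X) := by
  let a : ℤ → Bool := fun z => if 0 ≤ z then u.getD z.toNat false else false
  have hua : seg a 0 u.length = u := by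
    apply List.ext_getElem (by simp)
    intro n h1 h2
    simp [seg, a, h2]
  have hleft : ∀ k : ℕ, seg a (-k) k = List.replicate k false := by
    intro k
    apply List.ext_getElem (by simp)
    intro n h1 h2
    simp at h1
    simp [seg, a]
    omega
  have hright : ∀ k : ℕ, seg a u.length k = List.replicate k false := by
    intro k
    apply List.ext_getElem (by simp)
    intro n h1 h2
    have e : ((u.length : ℤ) + n).toNat = u.length + n := by omega
    simp [seg, a, e]
  refine mem_lang.2 ⟨a, ?_, 0, hua⟩
  intro w hw
  obtain ⟨i, hi⟩ := (occurs_iff _ _).1 hw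
  rw [mem_Wset]
  have hL : ∀ j m : ℕ, Win (langZ X) [] (seg a (-j) (j + u.length + m)) := by
    intro j m
    rw [seg_add, seg_add, hleft, neg_add_cancel, hua, Nat.cast_add, neg_add_cancel_left, hright,
      win_append]
    refine win_mono _ _ ?_ (hu j)
    intro y _ hy
    exact (win_replicate _ _ _).2 (lang_ext_right hy m)
  obtain ⟨j, hj⟩ : ∃ j : ℕ, 0 ≤ i + j := ⟨i.natAbs, by omega⟩
  obtain ⟨s, hs⟩ := Int.eq_ofNat_of_zero_le hj
  have h := hL j (s + w.length)
  rw [show j + u.length + (s + w.length) = s + w.length + (j + u.length) by omega,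
    seg_add, seg_add, show (-(j : ℤ) + s) = i by omega, hi] at h
  exact win_factor h

lemma main_glue {k : ℕ} (hG : Glue (langZ X) k) {u w : List Bool} {q p : List S}
    (hq : q.length = k) (hp : p.length = k) (hqu : Win (langZ X) q u) (hpw : Win (langZ X) p w)
    (n : ℕ)
    (hn : ∀ y : List S, y.length = u.length → q ++ y ∈ langZ X →
      ∃ v : List S, v.length = n ∧ q ++ y ++ v ++ p ∈ langZ X) :
    u ++ List.replicate (n + k) false ++ w ∈ langZ (WShiftZ X) := by
  have h0 : Win (langZ X) q (u ++ (List.replicate (n + k) false ++ w)) := by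
    rw [win_append]
    refine win_mono _ _ ?_ hqu
    intro y hy hL
    obtain ⟨v, hv, hvL⟩ := hn y hy hL
    simp only [Set.mem_setOf_eq]
    rw [win_append, win_replicate]
    refine ⟨v ++ p, by simp [hv, hp], ?_⟩
    simp only [Set.mem_setOf_eq]
    rw [← List.append_assoc, win_shift]
    refine win_mono _ _ ?_ hpw
    intro t _ ht
    have := hG _ p t hp.ge hvL ht
    simpa using this
  have hqL : q ∈ langZ X := by
    obtain ⟨v, hv⟩ := win_exists hqu
    exact lang_left hv
  apply mem_of_win
  intro j
  obtain ⟨z, hz, hzL⟩ := lang_ext_left hqL j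
  have h1 : Win (langZ X) []
      (List.replicate (k + j) false ++ (u ++ (List.replicate (n + k) false ++ w))) := by
    rw [win_append, win_replicate]
    refine ⟨z ++ q, by simp [hz, hq]; omega, ?_⟩
    simp only [List.nil_append, Set.mem_setOf_eq]
    rw [win_shift]
    refine win_mono _ _ ?_ h0
    intro t _ ht
    have := hG _ q t hq.ge hzL ht
    simpa using this
  refine win_factor (s := List.replicate k false) (t := []) ?_
  rw [List.replicate_add] at h1
  simpa only [List.append_assoc, List.append_nil] using h1

/-- Words that lead from `q` back to `q`. -/
def IsLoop (L : Set (List S)) (q G : List S) : Prop := G ++ q ∈ L ∧ q <+: G ++ q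

lemma loop_append {L : Set (List S)} {q G H : List S} (hG : Glue L q.length)
    (h1 : IsLoop L q G) (h2 : IsLoop L q H) : IsLoop L q (G ++ H) := by
  obtain ⟨h1, g, hg⟩ := h1
  obtain ⟨h2, h, hh⟩ := h2
  have e : G ++ H ++ q = G ++ q ++ h := by rw [List.append_assoc, ← hh, List.append_assoc]
  refine ⟨?_, g ++ h, ?_⟩
  · rw [e]
    exact hG _ _ _ le_rfl h1 (hh ▸ h2)
  · rw [e, ← hg, List.append_assoc]

lemma loop_sum {L : Set (List S)} {q : List S} (hG : Glue L q.length) (hq : q ∈ L)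
    (G : List S → List S) (s : Finset (List S)) (hs : ∀ r ∈ s, IsLoop L q (G r)) :
    ∃ H, IsLoop L q H ∧ H.length = ∑ r ∈ s, (G r).length := by
  classical
  induction s using Finset.induction_on with
  | empty => exact ⟨[], ⟨by simpa using hq, by simp⟩, by simp⟩
  | insert r s hr ih =>
    obtain ⟨H, hH, hl⟩ := ih fun t ht => hs t (Finset.mem_insert_of_mem ht)
    refine ⟨G r ++ H, loop_append hG (hs r (Finset.mem_insert_self _ _)) hH, ?_⟩
    rw [Finset.sum_insert hr, List.length_append, hl]

lemma exists_start {u : List Bool} (hu : u ∈ langZ (WShiftZ X)) (k : ℕ) :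
    ∃ q : List S, q.length = k ∧ Win (langZ X) q u := by
  have := win_of_mem hu k
  rw [win_append, win_replicate] at this
  simpa using this

lemma lang_of_win {q : List S} {u : List Bool} (h : Win (langZ X) q u) : q ∈ langZ X := by
  obtain ⟨v, hv⟩ := win_exists h
  exact lang_left hv

lemma mixing_part [Finite S] {k : ℕ} (hG : Glue (langZ X) k) (hM : MixingLang (langZ X)) :
    MixingLang (langZ (WShiftZ X)) := by
  intro u hu w hw
  obtain ⟨q, hq, hqu⟩ := exists_start hu k
  obtain ⟨p, hp, hpw⟩ := exists_start hw k
  have hfin : {y : List S | y.length = u.length}.Finite := List.finite_length_eq S u.length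
  have hev : ∀ᶠ n in Filter.atTop, ∀ y ∈ {y : List S | y.length = u.length},
      q ++ y ∈ langZ X → ∃ v : List S, v.length = n ∧ q ++ y ++ v ++ p ∈ langZ X := by
    rw [Filter.eventually_all_finite hfin]
    intro y _
    by_cases h : q ++ y ∈ langZ X
    · obtain ⟨N, hN⟩ := hM _ h p (lang_of_win hpw)
      exact Filter.eventually_atTop.2 ⟨N, fun n hn _ => hN n hn⟩
    · exact Filter.Eventually.of_forall fun n h' => absurd h' h
  obtain ⟨N, hN⟩ := Filter.eventually_atTop.1 hev
  refine ⟨N + k, fun n hn => ⟨List.replicate (n - k + k) false, by simp; omega, ?_⟩⟩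
  exact main_glue hG hq hp hqu hpw (n - k) (hN _ (by omega))

lemma transitive_part [Finite S] {k : ℕ} (hG : Glue (langZ X) k)
    (hT : TransitiveLang (langZ X)) : TransitiveLang (langZ (WShiftZ X)) := by
  classical
  intro u hu w hw
  obtain ⟨q, hq, hqu⟩ := exists_start hu k
  obtain ⟨p, hp, hpw⟩ := exists_start hw k
  have hqL := lang_of_win hqu
  have hpL := lang_of_win hpw
  have hGq : Glue (langZ X) q.length := by rw [hq]; exact hG
  have hfin : {y : List S | y.length = u.length ∧ q ++ y ∈ langZ X}.Finite :=
    (List.finite_length_eq S u.length).subset fun y hy => hy.1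
  have hr : ∀ y : List S, ∃ r : List S, q ++ y ∈ langZ X → q ++ y ++ r ++ q ∈ langZ X := by
    intro y
    by_cases h : q ++ y ∈ langZ X
    · obtain ⟨r, hr⟩ := hT _ h q hqL
      exact ⟨r, fun _ => hr⟩
    · exact ⟨[], fun h' => absurd h' h⟩
  choose r hr using hr
  let G : List S → List S := fun y => q ++ y ++ r y
  have hloop : ∀ y ∈ hfin.toFinset, IsLoop (langZ X) q (G y) := by
    intro y hy
    have hy' := (hfin.mem_toFinset.1 hy).2
    exact ⟨hr y hy', by simp [G]⟩
  obtain ⟨x, hx⟩ := hT q hqL p hpL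
  set M := ∑ y ∈ hfin.toFinset, (G y).length with hM
  refine ⟨_, main_glue hG hq hp hqu hpw (M - (k + u.length) + k + x.length) ?_⟩
  intro y hy hyL
  have hmem : y ∈ hfin.toFinset := hfin.mem_toFinset.2 ⟨hy, hyL⟩
  obtain ⟨H, hH, hHl⟩ := loop_sum hGq hqL G (hfin.toFinset.erase y)
    fun t ht => hloop t (Finset.mem_of_mem_erase ht)
  have hsum := Finset.add_sum_erase hfin.toFinset (fun y => (G y).length) hmem
  have hGl : (G y).length = k + u.length + (r y).length := by simp [G, hq, hy, add_assoc]
  refine ⟨r y ++ H ++ q ++ x, ?_, ?_⟩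
  · simp only [List.length_append, hHl, hq]
    simp only [hGl] at hsum
    omega
  · have h1 := (loop_append hGq (hloop y hmem) hH).1
    have h2 := hG _ q (x ++ p) hq.ge h1 (by simpa using hx)
    simpa [G] using h2

end WG

/-- Let `X ⊆ S^ℤ` be a two-directional subshift of finite type.
If `X` is mixing then its winning shift `W(X)` is mixing, and if `X` is transitive
then `W(X)` is transitive. -/
theorem winningShift_of_SFT_mixing_transitive {S : Type*} [Fintype S] [Nonempty S]
    (X : Set (ℤ → S))
    (hSFT : ∃ F : Set (List S), F.Finite ∧ X = { x : ℤ → S | ∀ w ∈ F, ¬ occursZ w x }) :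
    (MixingLang (langZ X) → MixingLang (langZ (WShiftZ X))) ∧
      (TransitiveLang (langZ X) → TransitiveLang (langZ (WShiftZ X))) := by
  obtain ⟨F, hF, hX⟩ := hSFT
  obtain ⟨k, hk⟩ := WG.glue_of_sft F hF hX
  exact ⟨WG.mixing_part hk, WG.transitive_part hk⟩
end

section
/- Let X ⊆ {0,1}^ℕ be a binary one-directional subshift. Then W(X) equals the subshift of {A,B}^ℕ consisting of all configurations containing at most one occurrence of the letter B (the subshift with language the factors of A*BA*) if and only if |B_n(X)| = n + 1 for all n ∈ ℕ. -/
/-- The prefix of length `n` of a configuration. -/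
def prefN (x : ℕ → Bool) (n : ℕ) : List Bool := (List.range n).map x

theorem prefN_succ (x : ℕ → Bool) (n : ℕ) : prefN x (n + 1) = prefN x n ++ [x n] := by
  simp [prefN, List.range_succ]

theorem prefN_length (x : ℕ → Bool) (n : ℕ) : (prefN x n).length = n := by
  simp [prefN]

theorem prefN_eq_iff (x y : ℕ → Bool) (n : ℕ) :
    prefN x n = prefN y n ↔ ∀ i < n, x i = y i := by
  simp [prefN]

theorem shift_iter (X : Set (ℕ → Bool)) (hXsh : ∀ x ∈ X, shiftN x ∈ X) (x : ℕ → Bool)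
    (hx : x ∈ X) (i : ℕ) : (fun j => x (i + j)) ∈ X := by
  induction i with
  | zero => simpa using hx
  | succ k ih =>
    have := hXsh _ ih
    convert this using 1
    funext j
    simp only [shiftN]
    congr 1
    omega

theorem mem_lang_iff (X : Set (ℕ → Bool)) (hXsh : ∀ x ∈ X, shiftN x ∈ X) (w : List Bool) :
    w ∈ langN X ↔ ∃ x ∈ X, w = prefN x w.length := by
  have key : ∀ (y : ℕ → Bool) (n : ℕ), (List.ofFn fun j : Fin n => y j.val) = prefN y n := by
    intro y n
    apply List.ext_getElem <;> simp [prefN]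
  constructor
  · rintro ⟨x, hx, i, h⟩
    refine ⟨_, shift_iter X hXsh x hx i, ?_⟩
    rw [← key]
    exact h
  · rintro ⟨x, hx, h⟩
    refine ⟨x, hx, 0, ?_⟩
    simp only [Nat.zero_add]
    rw [key]
    exact h

theorem pref_mem_lang (X : Set (ℕ → Bool)) (hXsh : ∀ x ∈ X, shiftN x ∈ X) (x : ℕ → Bool)
    (hx : x ∈ X) (n : ℕ) : prefN x n ∈ langN X := by
  rw [mem_lang_iff X hXsh]
  exact ⟨x, hx, by rw [prefN_length]⟩

theorem lang_left (X : Set (ℕ → Bool)) (hXsh : ∀ x ∈ X, shiftN x ∈ X) (w t : List Bool)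
    (h : w ++ t ∈ langN X) : w ∈ langN X := by
  rw [mem_lang_iff X hXsh] at h ⊢
  obtain ⟨x, hx, h⟩ := h
  refine ⟨x, hx, ?_⟩
  have := congrArg (List.take w.length) h
  simpa [prefN, ← List.map_take, List.take_range] using this

theorem lang_ext (X : Set (ℕ → Bool)) (hXsh : ∀ x ∈ X, shiftN x ∈ X) (w : List Bool)
    (h : w ∈ langN X) : ∃ c, w ++ [c] ∈ langN X := by
  obtain ⟨x, hx, h⟩ := (mem_lang_iff X hXsh w).1 h
  refine ⟨x w.length, ?_⟩
  have := pref_mem_lang X hXsh x hx (w.length + 1)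
  rw [prefN_succ, ← h] at this
  exact this

/-- Right special words of length `n`. -/
def RS (X : Set (ℕ → Bool)) (n : ℕ) : Set (List Bool) :=
  {w | w.length = n ∧ ∀ d, w ++ [d] ∈ langN X}

theorem ncard_lang_succ (X : Set (ℕ → Bool)) (hXsh : ∀ x ∈ X, shiftN x ∈ X) (n : ℕ) :
    Set.ncard {w | w ∈ langN X ∧ w.length = n + 1}
      = Set.ncard {w | w ∈ langN X ∧ w.length = n} + Set.ncard (RS X n) := by
  have fin : ∀ (m : ℕ) (s : Set (List Bool)), (∀ w ∈ s, w.length = m) → s.Finite :=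
    fun m s hs => (List.finite_length_eq Bool m).subset hs
  let F : Bool → Set (List Bool) := fun d => {w | w.length = n ∧ w ++ [d] ∈ langN X}
  have hF : ∀ d, (F d).Finite := fun d => fin n _ fun w hw => hw.1
  have h1 : {w | w ∈ langN X ∧ w.length = n} = F false ∪ F true := by
    ext w
    constructor
    · rintro ⟨hw, hl⟩
      obtain ⟨c, hc⟩ := lang_ext X hXsh w hw
      cases c
      · exact Or.inl ⟨hl, hc⟩
      · exact Or.inr ⟨hl, hc⟩
    · rintro (⟨hl, h⟩ | ⟨hl, h⟩) <;> exact ⟨lang_left X hXsh _ _ h, hl⟩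
  have h2 : RS X n = F false ∩ F true := by
    ext w
    constructor
    · rintro ⟨hl, h⟩
      exact ⟨⟨hl, h _⟩, ⟨hl, h _⟩⟩
    · rintro ⟨⟨hl, h⟩, ⟨_, h'⟩⟩
      refine ⟨hl, fun d => ?_⟩
      cases d
      · exact h
      · exact h'
  have h3 : {w | w ∈ langN X ∧ w.length = n + 1}
      = (fun w => w ++ [false]) '' F false ∪ (fun w => w ++ [true]) '' F true := by
    ext w
    constructor
    · rintro ⟨hw, hl⟩
      rcases List.eq_nil_or_concat w with rfl | ⟨v, c, rfl⟩
      · simp at hl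
      · simp at hl
        cases c
        · exact Or.inl ⟨v, ⟨hl, by simpa using hw⟩, by simp⟩
        · exact Or.inr ⟨v, ⟨hl, by simpa using hw⟩, by simp⟩
    · rintro (⟨v, ⟨hl, h⟩, rfl⟩ | ⟨v, ⟨hl, h⟩, rfl⟩) <;> exact ⟨h, by simp [hl]⟩
  have inj : ∀ d : Bool, Function.Injective (fun w : List Bool => w ++ [d]) := by
    intro d v w h
    simpa using h
  rw [h3, Set.ncard_union_eq ?_ ((hF _).image _) ((hF _).image _),
    Set.ncard_image_of_injective _ (inj _), Set.ncard_image_of_injective _ (inj _), h1, h2,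
    Set.ncard_union_add_ncard_inter _ _ (hF _) (hF _)]
  rw [Set.disjoint_left]
  rintro _ ⟨v, _, rfl⟩ ⟨w, _, h⟩
  have := congrArg List.getLast? h
  simp at this

theorem ncard_lang_zero (X : Set (ℕ → Bool)) (hXsh : ∀ x ∈ X, shiftN x ∈ X) (hne : X.Nonempty) :
    Set.ncard {w | w ∈ langN X ∧ w.length = 0} = 1 := by
  rw [Set.ncard_eq_one]
  refine ⟨[], ?_⟩
  ext w
  constructor
  · rintro ⟨_, hl⟩
    simpa using hl
  · rintro rfl
    obtain ⟨x, hx⟩ := hne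
    exact ⟨by simpa [prefN] using pref_mem_lang X hXsh x hx 0, rfl⟩

theorem playPref_eq (sA sB : List Bool → Bool) (a : ℕ → Bool) (n : ℕ) :
    playPref sA sB a n = prefN (playInf sA sB a) n := by
  induction n with
  | zero => simp [playPref, prefN]
  | succ k ih => rw [prefN_succ, ← ih]; rfl

theorem mem_of_prefixes (X : Set (ℕ → Bool)) (hXcl : IsClosed X)
    (hXsh : ∀ x ∈ X, shiftN x ∈ X) (x : ℕ → Bool) (h : ∀ n, prefN x n ∈ langN X) : x ∈ X := by
  have h' : ∀ n, ∃ y ∈ X, prefN x n = prefN y n := by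
    intro n
    obtain ⟨y, hy, e⟩ := (mem_lang_iff X hXsh _).1 (h n)
    exact ⟨y, hy, by rw [prefN_length] at e; exact e⟩
  choose y hy e using h'
  refine hXcl.mem_of_tendsto (f := y) (b := Filter.atTop) ?_ (Filter.Eventually.of_forall hy)
  rw [tendsto_pi_nhds]
  intro i
  apply tendsto_const_nhds.congr'
  filter_upwards [Filter.eventually_gt_atTop i] with n hn
  exact (prefN_eq_iff _ _ _).1 (e n) i hn

theorem win_of_invariant (X : Set (ℕ → Bool)) (hXcl : IsClosed X)
    (hXsh : ∀ x ∈ X, shiftN x ∈ X) (a : ℕ → Bool) (P : List Bool → Prop)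
    (hPX : ∀ w, P w → w ∈ langN X) (h0 : P [])
    (hA : ∀ w, P w → a w.length = false → ∃ c, P (w ++ [c]))
    (hB : ∀ w, P w → a w.length = true → ∀ c, P (w ++ [c])) : a ∈ WShift X := by
  classical
  have hstrat : ∀ w, ∃ c, (∃ d, P (w ++ [d])) → P (w ++ [c]) := by
    intro w
    by_cases h : ∃ d, P (w ++ [d])
    · obtain ⟨d, hd⟩ := h
      exact ⟨d, fun _ => hd⟩
    · exact ⟨false, fun h' => (h h').elim⟩
  choose sA hs using hstrat
  refine ⟨sA, fun sB => ?_⟩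
  apply mem_of_prefixes X hXcl hXsh
  intro n
  apply hPX
  rw [← playPref_eq]
  induction n with
  | zero => exact h0
  | succ k ih =>
    have hl : (playPref sA sB a k).length = k := by rw [playPref_eq, prefN_length]
    simp only [playPref]
    cases hk : a k
    · have hex := hA _ ih (by rw [hl, hk])
      simp only [Bool.false_eq_true, if_false]
      exact hs _ hex
    · exact hB _ ih (by rw [hl, hk]) _

theorem win_of_special (X : Set (ℕ → Bool)) (hXcl : IsClosed X)
    (hXsh : ∀ x ∈ X, shiftN x ∈ X) (a : ℕ → Bool) (n : ℕ) (U : Set (List Bool))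
    (hU : U ⊆ RS X n) (hne : U.Nonempty) (hgt : ∀ m > n, a m = false)
    (hlt : ∀ w : List Bool, w.length < n → a w.length = true → (∃ u ∈ U, w <+: u) →
      ∀ c, ∃ u ∈ U, w ++ [c] <+: u) : a ∈ WShift X := by
  have hpre : ∀ w, (∃ u ∈ U, w <+: u) → w ∈ langN X := by
    rintro w ⟨u, hu, t, rfl⟩
    have := (hU hu).2 true
    rw [List.append_assoc] at this
    exact lang_left X hXsh _ _ this
  have hn : ∀ w : List Bool, w.length = n → (∃ u ∈ U, w <+: u) → ∀ c, w ++ [c] ∈ langN X := by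
    rintro w hw ⟨u, hu, hwu⟩ c
    have : w = u := hwu.eq_of_length (by rw [hw, (hU hu).1])
    rw [this]
    exact (hU hu).2 c
  refine win_of_invariant X hXcl hXsh a
    (fun w => w ∈ langN X ∧ (w.length ≤ n → ∃ u ∈ U, w <+: u)) (fun w h => h.1) ?_ ?_ ?_
  · obtain ⟨u, hu⟩ := hne
    exact ⟨hpre _ ⟨u, hu, List.nil_prefix⟩, fun _ => ⟨u, hu, List.nil_prefix⟩⟩
  · rintro w ⟨hw, hw'⟩ _
    by_cases hl : w.length < n
    · obtain ⟨u, hu, t, rfl⟩ := hw' hl.le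
      cases t with
      | nil =>
        have := (hU hu).1
        simp at this
        omega
      | cons c t =>
        have hh : ∃ u ∈ U, w ++ [c] <+: u := ⟨_, hu, t, by simp⟩
        exact ⟨c, hpre _ hh, fun _ => hh⟩
    · obtain ⟨c, hc⟩ := lang_ext X hXsh w hw
      refine ⟨c, hc, fun h => ?_⟩
      simp at h
      omega
  · rintro w ⟨hw, hw'⟩ ha c
    rcases lt_trichotomy w.length n with hl | hl | hl
    · have hh := hlt w hl ha (hw' hl.le) c
      exact ⟨hpre _ hh, fun _ => hh⟩
    · refine ⟨hn w hl (hw' hl.le) c, fun h => ?_⟩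
      simp at h
      omega
    · rw [hgt _ hl] at ha
      simp at ha

theorem playPref_congr (sA sB sB' : List Bool → Bool) (a : ℕ → Bool) (n : ℕ)
    (h : ∀ w : List Bool, w.length < n → sB w = sB' w) :
    playPref sA sB a n = playPref sA sB' a n := by
  induction n with
  | zero => rfl
  | succ k ih =>
    have hl : (playPref sA sB' a k).length = k := by rw [playPref_eq, prefN_length]
    simp only [playPref]
    rw [ih fun w hw => h w (by omega)]
    have := h (playPref sA sB' a k) (by rw [hl]; omega)
    cases a k <;> simp [this]

/-- If `A` wins against turn order `a` and `a j = B`, any play of length `j` is right special. -/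
theorem special_of_win (X : Set (ℕ → Bool)) (hXsh : ∀ x ∈ X, shiftN x ∈ X) (a : ℕ → Bool)
    (sA : List Bool → Bool) (hs : ∀ sB, playInf sA sB a ∈ X) (j : ℕ) (hj : a j = true)
    (sB : List Bool → Bool) : playPref sA sB a j ∈ RS X j := by
  refine ⟨by rw [playPref_eq, prefN_length], fun d => ?_⟩
  let sB' : List Bool → Bool := fun w => if w.length < j then sB w else d
  have e : playPref sA sB a j = playPref sA sB' a j :=
    playPref_congr _ _ _ _ _ fun w hw => by simp [sB', hw]
  have := pref_mem_lang X hXsh _ (hs sB') (j + 1)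
  rw [← playPref_eq] at this
  have hl : (playPref sA sB' a j).length = j := by rw [playPref_eq, prefN_length]
  rw [e]
  simpa [playPref, hj, sB', hl] using this

theorem first_diff (u v : List Bool) (hl : u.length = v.length) (hne : u ≠ v) :
    ∃ p s t c, u = p ++ c :: s ∧ v = p ++ (!c) :: t := by
  induction u generalizing v with
  | nil => cases v <;> simp_all
  | cons c u ih =>
    cases v with
    | nil => simp at hl
    | cons d v =>
      by_cases hcd : c = d
      · subst hcd
        obtain ⟨p, s, t, e, h1, h2⟩ := ih v (by simpa using hl) (by simpa using hne)
        exact ⟨c :: p, s, t, e, by simp [h1], by simp [h2]⟩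
      · refine ⟨[], u, v, c, rfl, ?_⟩
        cases c <;> cases d <;> simp_all

/-- A binary one-directional subshift `X ⊆ {0,1}^ℕ` has winning
shift equal to the set of configurations with at most one occurrence of `B` if and
only if `|B_n(X)| = n + 1` for all `n`. -/
theorem winningShift_atMostOneB_iff_complexity (X : Set (ℕ → Bool))
    (hXcl : IsClosed X) (hXsh : ∀ x ∈ X, shiftN x ∈ X) :
    WShift X = { a : ℕ → Bool | ∀ i j : ℕ, a i = true → a j = true → i = j } ↔
      ∀ n : ℕ, Set.ncard { w | w ∈ langN X ∧ w.length = n } = n + 1 := by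
  have hcard : (∀ n : ℕ, Set.ncard { w | w ∈ langN X ∧ w.length = n } = n + 1) ↔
      X.Nonempty ∧ ∀ n, Set.ncard (RS X n) = 1 := by
    constructor
    · intro h
      constructor
      · have h0 := h 0
        have : Set.Nonempty { w | w ∈ langN X ∧ w.length = 0 } := by
          apply Set.nonempty_of_ncard_ne_zero
          omega
        obtain ⟨w, ⟨x, hx, _⟩, _⟩ := this
        exact ⟨x, hx⟩
      · intro n
        have := ncard_lang_succ X hXsh n
        rw [h, h] at this
        omega
    · rintro ⟨hne, h⟩ n
      induction n with
      | zero => exact ncard_lang_zero X hXsh hne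
      | succ k ih => rw [ncard_lang_succ X hXsh, ih, h]
  rw [hcard]
  constructor
  · intro hW
    have hwin : ∀ a : ℕ → Bool, (∀ i j : ℕ, a i = true → a j = true → i = j) → a ∈ WShift X :=
      fun a ha => by rw [hW]; exact ha
    constructor
    · obtain ⟨sA, hs⟩ := hwin (fun _ => false) (by simp)
      exact ⟨_, hs sA⟩
    · intro n
      obtain ⟨sA, hs⟩ := hwin (fun i => decide (i = n)) (by
        intro i j hi hj
        simp at hi hj
        omega)
      have hu := special_of_win X hXsh _ sA hs n (by simp) sA
      rw [Set.ncard_eq_one]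
      refine ⟨_, Set.eq_singleton_iff_unique_mem.2 ⟨hu, ?_⟩⟩
      intro v hv
      by_contra hne
      generalize playPref sA sA (fun i => decide (i = n)) n = u at *
      obtain ⟨p, s, t, c, h1, h2⟩ := first_diff u v (by rw [hu.1, hv.1]) (Ne.symm hne)
      have hpn : p.length < n := by
        have := hu.1
        rw [h1] at this
        simp at this
        omega
      have hmem : (fun i => decide (i = p.length ∨ i = n)) ∈ WShift X := by
        refine win_of_special X hXcl hXsh _ n {u, v} ?_ ⟨u, by simp⟩ ?_ ?_
        · rintro w (rfl | rfl)
          · exact hu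
          · exact hv
        · intro m hm
          simp
          omega
        · intro w hwn hwa hw d
          have hwp : w.length = p.length := by
            simp at hwa
            omega
          have : w = p := by
            have aux : ∀ r, w <+: p ++ r → w = p := by
              rintro r ⟨q, hq⟩
              exact (List.append_inj hq hwp).1
            obtain ⟨x, (rfl | rfl), hx⟩ := hw
            · rw [h1] at hx
              exact aux _ hx
            · rw [h2] at hx
              exact aux _ hx
          subst this
          by_cases hd : d = c
          · exact ⟨u, by simp, s, by simp [h1, hd]⟩
          · refine ⟨v, by simp, t, ?_⟩
            have : d = !c := by cases c <;> cases d <;> simp_all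
            simp [h2, this]
      rw [hW] at hmem
      have := hmem p.length n (by simp) (by simp)
      omega
  · rintro ⟨hne, h⟩
    have hRS : ∀ n, (RS X n).Nonempty := fun n =>
      Set.nonempty_of_ncard_ne_zero (by rw [h]; simp)
    have huniq : ∀ n, ∀ u ∈ RS X n, ∀ v ∈ RS X n, u = v := by
      intro n u hu v hv
      obtain ⟨w, hw⟩ := Set.ncard_eq_one.1 (h n)
      rw [hw] at hu hv
      rw [hu, hv]
    have hlose : ∀ a ∈ WShift X, ∀ i j : ℕ, i < j → a i = true → a j = true → False := by
      rintro a ⟨sA, hs⟩ i j hij hi hj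
      have e := huniq j _ (special_of_win X hXsh a sA hs j hj fun _ => false)
        _ (special_of_win X hXsh a sA hs j hj fun _ => true)
      rw [playPref_eq, playPref_eq, prefN_eq_iff] at e
      have := e i hij
      simp [playInf, hi] at this
    ext a
    constructor
    · intro ha i j hi hj
      rcases lt_trichotomy i j with hl | hl | hl
      · exact (hlose a ha i j hl hi hj).elim
      · exact hl
      · exact (hlose a ha j i hl hj hi).elim
    · intro ha
      have : ∃ n, ∀ m, m ≠ n → a m = false := by
        by_cases hex : ∃ n, a n = true
        · obtain ⟨n, hn⟩ := hex
          refine ⟨n, fun m hm => ?_⟩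
          by_contra hc
          exact hm (ha m n (by simpa using hc) hn)
        · push Not at hex
          exact ⟨0, fun m _ => by simpa using hex m⟩
      obtain ⟨n, hn⟩ := this
      refine win_of_special X hXcl hXsh a n (RS X n) subset_rfl (hRS n)
        (fun m hm => hn m (by omega)) ?_
      intro w hw hwa
      rw [hn _ (by omega)] at hwa
      simp at hwa
end

section
/- Let τ : {0,1} → {0,1}* be a uniform substitution (|τ(0)| = |τ(1)|) which is primitive (there exists n ∈ ℕ such that for all s, s' ∈ {0,1}, the letter s' occurs in τⁿ(s)), and suppose the two-directional substitution subshift X_τ ⊆ {0,1}^ℤ, whose language is { w : w occurs in τⁿ(s) for some n ∈ ℕ, s ∈ {0,1} }, is aperiodic (no point of X_τ is fixed by σ^p for any p ≥ 1). Then W(X_τ) equals the two-directional subshift of {A,B}^ℤ consisting of all configurations containing at most one occurrence of the letter B. -/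
/-- A substitution `τ : S → S*` extended to words by concatenation. -/
def substWord {S : Type*} (τ : S → List S) (w : List S) : List S := w.flatMap τ

/-- The iterates `τⁿ(s)` of a substitution applied to a single letter. -/
def substIter {S : Type*} (τ : S → List S) : ℕ → S → List S
  | 0, s => [s]
  | n + 1, s => substWord τ (substIter τ n s)

/-- The language of a substitution: all factors of the words `τⁿ(s)`. -/
def substLang {S : Type*} (τ : S → List S) : Set (List S) :=
  { w | ∃ n : ℕ, ∃ s : S, w <:+: substIter τ n s }

/-- The two-directional subshift of a substitution: all configurations whose every
finite factor lies in the language of the substitution. -/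
def substShift {S : Type*} (τ : S → List S) : Set (ℤ → S) :=
  { x | ∀ w : List S, occursZ w x → w ∈ substLang τ }

namespace WinProof

/-- Game value by backward recursion. -/
def Win (X : Set (List Bool)) : List Bool → List Bool → Prop
  | [], w => w ∈ X
  | false :: r, w => ∃ c, Win X r (w ++ [c])
  | true :: r, w => ∀ c, Win X r (w ++ [c])

lemma playAux_congr (sA sA' sB sB' : List Bool → Bool) :
    ∀ (l w : List Bool), (∀ v, w <+: v → sA v = sA' v) → (∀ v, w <+: v → sB v = sB' v) →
      playAux sA sB l w = playAux sA' sB' l w := by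
  intro l
  induction l with
  | nil => intro w _ _; rfl
  | cons b r ih =>
    intro w hA hB
    have e : (if b then sB else sA) w = (if b then sB' else sA') w := by
      cases b
      · exact hA w List.prefix_rfl
      · exact hB w List.prefix_rfl
    simp only [playAux]
    rw [e]
    apply ih
    · intro v hv; exact hA v ((List.prefix_append _ _).trans hv)
    · intro v hv; exact hB v ((List.prefix_append _ _).trans hv)

lemma win_of_strategy (X : Set (List Bool)) : ∀ (l w : List Bool) (sA : List Bool → Bool),
    (∀ sB : List Bool → Bool, playAux sA sB l w ∈ X) → Win X l w := by
  intro l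
  induction l with
  | nil => intro w sA h; exact h sA
  | cons b r ih =>
    intro w sA h
    cases b
    · refine ⟨sA w, ih _ sA fun sB => ?_⟩
      have := h sB
      simpa [playAux] using this
    · intro c
      refine ih _ sA fun sB => ?_
      have := h (Function.update sB w c)
      simp only [playAux, if_true, Function.update_self] at this
      rw [playAux_congr sA sA _ sB] at this
      · exact this
      · intros; rfl
      · intro v hv
        apply Function.update_of_ne
        rintro rfl
        have := hv.length_le
        simp at this

lemma strategy_of_win (X : Set (List Bool)) : ∀ (l w : List Bool), Win X l w →
    ∃ sA : List Bool → Bool, ∀ sB : List Bool → Bool, playAux sA sB l w ∈ X := by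
  intro l
  induction l with
  | nil => intro w h; exact ⟨fun _ => false, fun _ => h⟩
  | cons b r ih =>
    intro w h
    cases b
    · obtain ⟨c, hc⟩ := h
      obtain ⟨sA, hs⟩ := ih _ hc
      refine ⟨Function.update sA w c, fun sB => ?_⟩
      have := hs sB
      simp only [playAux, Function.update_self]
      rw [playAux_congr (sA' := sA) (sB' := sB)]
      · simpa using this
      · intro v hv
        apply Function.update_of_ne
        rintro rfl
        have := hv.length_le
        simp at this
      · intros; rfl
    · choose sA hs using fun c => ih _ (h c)
      refine ⟨fun v => sA (v.getD w.length false) v, fun sB => ?_⟩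
      simp only [playAux, if_true]
      rw [playAux_congr (sA' := sA (sB w)) (sB' := sB)]
      · exact hs _ sB
      · rintro v ⟨t, rfl⟩
        simp
      · intros; rfl

lemma mem_Wset (X : Set (List Bool)) (l : List Bool) : l ∈ Wset X ↔ Win X l [] :=
  ⟨fun ⟨sA, h⟩ => win_of_strategy X l [] sA h, fun h => strategy_of_win X l [] h⟩

lemma Win.exists_append {X : Set (List Bool)} : ∀ {l r w : List Bool}, Win X (l ++ r) w →
    ∃ v, v.length = l.length ∧ Win X r (w ++ v) := by
  intro l
  induction l with
  | nil => intro r w h; exact ⟨[], rfl, by simpa using h⟩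
  | cons b l ih =>
    intro r w h
    have : ∃ c, Win X (l ++ r) (w ++ [c]) := by
      cases b
      · exact h
      · exact ⟨true, h true⟩
    obtain ⟨c, hc⟩ := this
    obtain ⟨v, hv, hw⟩ := ih hc
    exact ⟨c :: v, by simp [hv], by simpa using hw⟩

lemma win_append {X : Set (List Bool)} : ∀ {l r w v : List Bool}, true ∉ l →
    v.length = l.length → Win X r (w ++ v) → Win X (l ++ r) w := by
  intro l
  induction l with
  | nil => intro r w v _ hv h; simp at hv; subst hv; simpa using h
  | cons b l ih =>
    intro r w v hb hv h
    cases v with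
    | nil => simp at hv
    | cons c v =>
      simp at hb
      obtain ⟨rfl, hb⟩ := hb
      exact ⟨c, ih hb (by simpa using hv) (by simpa using h)⟩

/-- factor of a two-sided word -/
def zw (x : ℤ → Bool) (i : ℤ) (n : ℕ) : List Bool := List.ofFn fun j : Fin n => x (i + j.val)

lemma zw_length (x : ℤ → Bool) (i : ℤ) (n : ℕ) : (zw x i n).length = n := by simp [zw]

lemma zw_add (x : ℤ → Bool) (i : ℤ) (m n : ℕ) : zw x i (m + n) = zw x i m ++ zw x (i + m) n := by
  simp [zw, List.ofFn_add, add_assoc]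

lemma zw_one (x : ℤ → Bool) (i : ℤ) : zw x i 1 = [x i] := by simp [zw]

lemma occursZ_zw (x : ℤ → Bool) (i : ℤ) (n : ℕ) : occursZ (zw x i n) x := by
  refine ⟨i, ?_⟩
  apply List.ext_getElem
  · simp
  · intro k h1 h2; simp [zw]

lemma occursZ_iff (w : List Bool) (x : ℤ → Bool) : occursZ w x ↔ ∃ i n, w = zw x i n := by
  constructor
  · rintro ⟨i, h⟩; exact ⟨i, _, h⟩
  · rintro ⟨i, n, rfl⟩; exact occursZ_zw x i n

lemma zw_infix (x : ℤ → Bool) (i j : ℤ) (m n : ℕ) (h1 : j ≤ i) (h2 : i + n ≤ j + m) :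
    zw x i n <:+: zw x j m := by
  obtain ⟨a, ha⟩ := Int.le.dest h1
  obtain ⟨b, hb⟩ := Int.le.dest h2
  have : m = a + n + b := by omega
  subst this
  rw [zw_add, zw_add, ha]
  exact ⟨_, _, rfl⟩

lemma lang_infix {τ : Bool → List Bool} {v w : List Bool} (h : w ∈ substLang τ) (hv : v <:+: w) :
    v ∈ substLang τ := by
  obtain ⟨n, s, h⟩ := h
  exact ⟨n, s, hv.trans h⟩

lemma zw_congr_mod {y : ℤ → Bool} {d : ℕ} (hy : ∀ t, y (t + d) = y t) (i : ℤ) (k : ℤ) (n : ℕ) :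
    zw y (i + d * k) n = zw y i n := by
  have hk : ∀ t, y (t + d * k) = y t := by
    have h : Function.Periodic y (d : ℤ) := hy
    intro t
    have := h.int_mul k t
    rw [mul_comm]; exact_mod_cast this
  unfold zw
  congr 1
  funext j
  rw [add_right_comm, hk]

/-- no long periodic words -/
lemma no_periodic {τ : Bool → List Bool}
    (haper : ∀ x ∈ substShift τ, ∀ p : ℕ, 1 ≤ p → (fun i => x (i + (p : ℤ))) ≠ x)
    (y : ℤ → Bool) (d : ℕ) (hd : 1 ≤ d) (hy : ∀ t, y (t + d) = y t)
    (hw : ∀ n, ∃ i, zw y i n ∈ substLang τ) : False := by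
  refine haper y ?_ d hd (funext hy)
  intro w h
  obtain ⟨i, n, rfl⟩ := (occursZ_iff _ _).1 h
  obtain ⟨j, hj⟩ := hw (n + d)
  have hd' : (0:ℤ) < d := by omega
  have e := Int.emod_add_mul_ediv (i - j) d
  have h0 := Int.emod_nonneg (i - j) hd'.ne'
  have h1 := Int.emod_lt_of_pos (i - j) hd'
  rw [show i = (j + (i - j) % d) + d * ((i - j) / d) by omega, zw_congr_mod hy]
  exact lang_infix hj (zw_infix _ _ _ _ _ (by omega) (by push_cast; omega))

lemma substIter_add (τ : Bool → List Bool) (n k : ℕ) (s : Bool) :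
    substIter τ (n + k) s = (substIter τ n s).flatMap (substIter τ k) := by
  induction k with
  | zero => simp [substIter]
  | succ k ih =>
    rw [← add_assoc]
    simp only [substIter, substWord, ih, List.flatMap_assoc]

lemma length_flatMap {τ : Bool → List Bool} {L : ℕ} (hL : ∀ s, (τ s).length = L) (v : List Bool) :
    (v.flatMap τ).length = L * v.length := by
  induction v with
  | nil => simp
  | cons a v ih => simp [List.flatMap_cons, hL, ih]; ring

lemma length_substIter {τ : Bool → List Bool} {L : ℕ} (hL : ∀ s, (τ s).length = L) (n : ℕ) (s : Bool) :
    (substIter τ n s).length = L ^ n := by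
  induction n with
  | zero => simp [substIter]
  | succ n ih => rw [substIter, substWord, length_flatMap hL, ih]; ring

lemma lang_subst {τ : Bool → List Bool} {w : List Bool} (h : w ∈ substLang τ) :
    w.flatMap τ ∈ substLang τ := by
  obtain ⟨n, s, a, b, h⟩ := h
  refine ⟨n + 1, s, a.flatMap τ, b.flatMap τ, ?_⟩
  rw [substIter, substWord, ← h]; simp

/-- left-infinite words: `x 0` is the last letter -/
def lw (x : ℕ → Bool) : ℕ → List Bool
  | 0 => []
  | n + 1 => x n :: lw x n

lemma lw_length (x : ℕ → Bool) (n : ℕ) : (lw x n).length = n := by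
  induction n with
  | zero => rfl
  | succ n ih => simp [lw, ih]

lemma lw_add (x : ℕ → Bool) (a b : ℕ) : lw x (a + b) = lw (fun i => x (i + a)) b ++ lw x a := by
  induction b with
  | zero => simp [lw]
  | succ b ih => rw [← add_assoc, lw, ih, lw]; simp [add_comm]

lemma lw_get (x : ℕ → Bool) (n i : ℕ) (h : i < (lw x n).length) : (lw x n)[i] = x (n - 1 - i) := by
  induction n generalizing i with
  | zero => simp [lw] at h
  | succ n ih =>
    cases i with
    | zero => simp [lw]
    | succ i =>
      simp only [lw, List.getElem_cons_succ]
      rw [ih]; congr 1; omega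

def cons (c : Bool) (x : ℕ → Bool) : ℕ → Bool
  | 0 => c
  | n + 1 => x n

lemma lw_cons (c : Bool) (x : ℕ → Bool) (n : ℕ) : lw (cons c x) (n + 1) = lw x n ++ [c] := by
  rw [add_comm, lw_add]; simp [cons, lw]

def InL (τ : Bool → List Bool) (x : ℕ → Bool) : Prop := ∀ n, lw x n ∈ substLang τ

def RS (τ : Bool → List Bool) (x : ℕ → Bool) : Prop := ∀ c, InL τ (cons c x)

lemma InL.drop {τ : Bool → List Bool} {x : ℕ → Bool} (h : InL τ x) (a : ℕ) :
    InL τ (fun i => x (i + a)) := by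
  intro n
  refine lang_infix (h (a + n)) ?_
  rw [lw_add]; exact (List.prefix_append _ _).isInfix

lemma lw_suffix (x : ℕ → Bool) {m n : ℕ} (h : m ≤ n) : lw x m <:+: lw x n := by
  obtain ⟨k, rfl⟩ := Nat.exists_eq_add_of_le h
  rw [lw_add]; exact (List.suffix_append _ _).isInfix

lemma RS.inL {τ : Bool → List Bool} {x : ℕ → Bool} (h : RS τ x) : InL τ x := (h true).drop 1

def appL (x : ℕ → Bool) (l : List Bool) : ℕ → Bool := l.foldl (fun x c => cons c x) x

lemma appL_ge (l : List Bool) : ∀ (x : ℕ → Bool) (i : ℕ), appL x l (l.length + i) = x i := by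
  induction l with
  | nil => intro x i; simp [appL]
  | cons c l ih =>
    intro x i
    have := ih (cons c x) (i + 1)
    simp only [appL, List.foldl_cons, List.length_cons] at this ⊢
    rw [show l.length + 1 + i = l.length + (i + 1) by omega, this]; rfl

lemma lw_appL (l : List Bool) : ∀ (x : ℕ → Bool) (n : ℕ), lw (appL x l) (n + l.length) = lw x n ++ l := by
  induction l with
  | nil => intro x i; simp [appL]
  | cons c l ih =>
    intro x n
    have := ih (cons c x) (n + 1)
    simp only [appL, List.foldl_cons, List.length_cons] at this ⊢
    rw [show n + (l.length + 1) = n + 1 + l.length by omega, this, lw_cons]; simp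

/-- substitution on left-infinite words -/
def T (τ : Bool → List Bool) (L : ℕ) (y : ℕ → Bool) : ℕ → Bool :=
  fun i => (τ (y (i / L))).getD (L - 1 - i % L) false

lemma lw_T {τ : Bool → List Bool} {L : ℕ} (hL : ∀ s, (τ s).length = L) (y : ℕ → Bool)
    (n : ℕ) : lw (T τ L y) (L * n) = (lw y n).flatMap τ := by
  induction n with
  | zero => simp [lw]
  | succ n ih =>
    rw [mul_add, mul_one, lw_add, ih, lw, List.flatMap_cons]
    congr 1
    apply List.ext_getElem
    · rw [lw_length, hL]
    · intro i h1 h2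
      rw [lw_length] at h1
      rw [lw_get]
      have : 0 < L := by omega
      simp only [T]
      rw [Nat.add_mul_div_left _ _ this, Nat.div_eq_of_lt (by omega), Nat.add_mul_mod_self_left,
        Nat.mod_eq_of_lt (by omega), zero_add, show L - 1 - (L - 1 - i) = i by omega,
        List.getD_eq_getElem _ _ (by rw [hL]; omega)]

lemma InL.T {τ : Bool → List Bool} {L : ℕ} (hL : ∀ s, (τ s).length = L) (h1 : 1 ≤ L) {y : ℕ → Bool}
    (h : InL τ y) : InL τ (T τ L y) := by
  intro n
  have := lang_subst (h n)
  rw [← lw_T hL] at this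
  exact lang_infix this (lw_suffix _ (Nat.le_mul_of_pos_left _ h1))

/-- the map on right special left-infinite words -/
def F (τ : Bool → List Bool) (L q : ℕ) (x : ℕ → Bool) : ℕ → Bool :=
  fun i => T τ L (cons false x) (i + (L - q))

structure Dat (τ : Bool → List Bool) (L q : ℕ) : Prop where
  hL : ∀ s, (τ s).length = L
  h2 : 2 ≤ L
  hq : q < L
  hlt : ∀ i < q, (τ true).getD i false = (τ false).getD i false
  hne : (τ true).getD q false ≠ (τ false).getD q false

variable {τ : Bool → List Bool} {L q : ℕ}

lemma Dat.F_eq (D : Dat τ L q) (c : Bool) (x : ℕ → Bool) :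
    F τ L q x = fun i => T τ L (cons c x) (i + (L - q)) := by
  have := D.hq
  funext i
  simp only [F, T]
  by_cases h : i < q
  · rw [Nat.div_eq_of_lt (by omega), Nat.mod_eq_of_lt (by omega)]
    simp only [cons]
    have := D.hlt (L - 1 - (i + (L - q))) (by omega)
    cases c <;> simp_all
  · have : 1 ≤ (i + (L - q)) / L := by
      rw [Nat.le_div_iff_mul_le (by omega)]; omega
    obtain ⟨k, hk⟩ := Nat.exists_eq_add_of_le' this
    rw [hk]; rfl

lemma Dat.cons_F (D : Dat τ L q) (c : Bool) (x : ℕ → Bool) :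
    cons ((τ c).getD q false) (F τ L q x) = fun i => T τ L (cons c x) (i + (L - q - 1)) := by
  have := D.hq
  funext i
  cases i with
  | zero =>
    simp only [cons, T]
    rw [Nat.div_eq_of_lt (by omega), Nat.mod_eq_of_lt (by omega)]
    rw [show L - 1 - (0 + (L - q - 1)) = q by omega]
  | succ i =>
    simp only [cons]
    rw [D.F_eq c]
    simp only
    congr 1; omega

lemma Dat.RS_F (D : Dat τ L q) {x : ℕ → Bool} (h : RS τ x) : RS τ (F τ L q x) := by
  intro b
  have : ∃ c, (τ c).getD q false = b := by
    have := D.hne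
    by_contra! hh
    have h1 := hh true
    have h2 := hh false
    clear hh
    revert h1 h2 this
    generalize (τ true).getD q false = u
    generalize (τ false).getD q false = v
    revert u v b; decide
  obtain ⟨c, rfl⟩ := this
  rw [D.cons_F]
  exact ((h c).T D.hL (by have := D.h2; omega)).drop _

lemma Dat.F_inj (D : Dat τ L q) : Function.Injective (F τ L q) := by
  intro x y h
  funext i
  have hq := D.hq
  have h1 := congrFun h (q + (L * i + (L - 1 - q)))
  simp only [F, T] at h1
  rw [show q + (L * i + (L - 1 - q)) + (L - q) = (L - 1 - q) + L * (i + 1) by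
    rw [mul_add]; omega] at h1
  rw [Nat.add_mul_div_left _ _ (by omega), Nat.div_eq_of_lt (by omega), Nat.add_mul_mod_self_left,
        Nat.mod_eq_of_lt (by omega), zero_add, show L - 1 - (L - 1 - q) = q by omega] at h1
  simp only [cons] at h1
  have := D.hne
  revert h1
  cases x i <;> cases y i <;> simp_all [eq_comm]

lemma Dat.F_agree (D : Dat τ L q) {x y : ℕ → Bool} {n : ℕ} (hn : 1 ≤ q + n)
    (h : ∀ i < n, x i = y i) : ∀ i < n + 1, F τ L q x i = F τ L q y i := by
  intro i hi
  have hq := D.hq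
  have h2 := D.h2
  simp only [F, T]
  congr 2
  have key : (i + (L - q)) / L < n + 1 := by
    rw [Nat.div_lt_iff_lt_mul (by omega)]
    nlinarith [Nat.sub_add_cancel hq.le]
  rcases hk : (i + (L - q)) / L with _ | k
  · rfl
  · simp only [cons]
    apply h; omega

lemma Dat.agree_iter (D : Dat τ L q) {x y : ℕ → Bool} {n : ℕ} (hn : 1 ≤ q + n)
    (h : ∀ i < n, x i = y i) (N : ℕ) :
    ∀ i < n + N, (F τ L q)^[N] x i = (F τ L q)^[N] y i := by
  induction N with
  | zero => simpa using h
  | succ N ih =>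
    rw [Function.iterate_succ_apply', Function.iterate_succ_apply']
    exact D.F_agree (n := n + N) (by omega) ih

lemma Dat.fixed_unique (D : Dat τ L q) {x y : ℕ → Bool} {n N : ℕ} (hN : 1 ≤ N) (hn : 1 ≤ q + n)
    (h : ∀ i < n, x i = y i) (hx : (F τ L q)^[N] x = x) (hy : (F τ L q)^[N] y = y) : x = y := by
  have : ∀ k, ∀ i < n + k, x i = y i := by
    intro k
    induction k with
    | zero => simpa using h
    | succ k ih =>
      have := D.agree_iter (by omega) ih N
      rw [hx, hy] at this
      intro i hi; exact this i (by omega)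
  funext i
  exact this (i + 1) i (by omega)

/-- Among three fixed points two coincide. -/
lemma Dat.three (D : Dat τ L q) {x y z : ℕ → Bool} {N : ℕ} (hN : 1 ≤ N)
    (hx : (F τ L q)^[N] x = x) (hy : (F τ L q)^[N] y = y) (hz : (F τ L q)^[N] z = z) :
    x = y ∨ x = z ∨ y = z := by
  have h : x 0 = y 0 ∨ x 0 = z 0 ∨ y 0 = z 0 := by
    cases x 0 <;> cases y 0 <;> cases z 0 <;> simp
  rcases h with h | h | h
  · exact Or.inl (D.fixed_unique (n := 1) hN (by omega) (by intro i hi; simp at hi; simp [hi, h]) hx hy)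
  · exact Or.inr (Or.inl (D.fixed_unique (n := 1) hN (by omega) (by intro i hi; simp at hi; simp [hi, h]) hx hz))
  · exact Or.inr (Or.inr (D.fixed_unique (n := 1) hN (by omega) (by intro i hi; simp at hi; simp [hi, h]) hy hz))

lemma window {σ : Bool → List Bool} {M : ℕ} (hM : ∀ s, (σ s).length = M) (h1 : 1 ≤ M) :
    ∀ (v : List Bool) (i : ℕ), i + M ≤ M * v.length →
      ∃ (a b : Bool) (r : Fin M), ((v.flatMap σ).drop i).take M = ((σ a ++ σ b).drop r).take M := by
  intro v
  induction v with
  | nil => intro i h; simp at h; omega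
  | cons c v ih =>
    intro i h
    by_cases hi : M ≤ i
    · obtain ⟨a, b, r, e⟩ := ih (i - M) (by simp [mul_add] at h; omega)
      refine ⟨a, b, r, ?_⟩
      rw [← e, List.flatMap_cons, List.drop_append, hM, List.drop_of_length_le (by rw [hM]; exact hi)]
      simp
    · cases v with
      | nil =>
        have : i = 0 := by simp at h; omega
        subst this
        refine ⟨c, c, ⟨0, h1⟩, ?_⟩
        simp [List.take_append, hM]
      | cons b v =>
        refine ⟨c, b, ⟨i, by omega⟩, ?_⟩
        rw [List.flatMap_cons, List.flatMap_cons, ← List.append_assoc,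
          List.drop_append_of_le_length (l₁ := σ c ++ σ b) (by simp [hM]; omega),
          List.take_append_of_le_length (by simp [hM]; omega)]

/-- words of length `n` in the language -/
def P (τ : Bool → List Bool) (n : ℕ) : Set (List Bool) := {v | v ∈ substLang τ ∧ v.length = n}

lemma P_finite (n : ℕ) : (P τ n).Finite :=
  (List.finite_length_eq Bool n).subset fun _ h => h.2

lemma P_upper (hL : ∀ s, (τ s).length = L) (h2 : 2 ≤ L) (k : ℕ) :
    (P τ (L ^ k)).ncard ≤ 4 * L ^ k := by
  have hM : ∀ s, (substIter τ k s).length = L ^ k := fun s => length_substIter hL k s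
  have h1 : 1 ≤ L ^ k := Nat.one_le_pow _ _ (by omega)
  let G : Bool × Bool × Fin (L ^ k) → List Bool := fun t =>
    ((substIter τ k t.1 ++ substIter τ k t.2.1).drop t.2.2).take (L ^ k)
  have hsub : P τ (L ^ k) ⊆ G '' Set.univ := by
    rintro w ⟨⟨n, s, a, b, h⟩, hw⟩
    have hlen := congrArg List.length h
    rw [length_substIter hL] at hlen
    simp only [List.length_append] at hlen
    have hkn : k ≤ n := by
      by_contra hc
      have := Nat.pow_lt_pow_right (a := L) (by omega) (not_le.1 hc)
      omega
    obtain ⟨m, rfl⟩ := Nat.exists_eq_add_of_le' hkn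
    rw [substIter_add] at h
    obtain ⟨c, d, r, e⟩ := window hM h1 (substIter τ m s) a.length (by
      rw [length_substIter hL, ← pow_add, add_comm k]; omega)
    refine ⟨(c, d, r), trivial, ?_⟩
    show ((substIter τ k c ++ substIter τ k d).drop r).take (L ^ k) = w
    rw [← e, ← h, List.append_assoc, List.drop_left, ← hw, List.take_left]
  calc (P τ (L ^ k)).ncard ≤ (G '' Set.univ).ncard := Set.ncard_le_ncard hsub (Set.toFinite _)
    _ ≤ (Set.univ : Set (Bool × Bool × Fin (L ^ k))).ncard := Set.ncard_image_le
    _ = 4 * L ^ k := by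
      rw [Set.ncard_univ, Nat.card_eq_fintype_card]; simp; ring

lemma lw_inj {x y : ℕ → Bool} {n : ℕ} (h : lw x n = lw y n) : ∀ i < n, x i = y i := by
  induction n with
  | zero => intro i hi; omega
  | succ n ih =>
    simp only [lw, List.cons.injEq] at h
    intro i hi
    rcases Nat.lt_succ_iff_lt_or_eq.1 hi with hi | rfl
    · exact ih h.2 i hi
    · exact h.1

lemma P_step (hext : ∀ w ∈ substLang τ, ∃ c c' : Bool, c :: w ++ [c'] ∈ substLang τ)
    (A : Finset (ℕ → Bool)) (hA : ∀ x ∈ A, RS τ x) (n : ℕ)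
    (hn : ∀ x ∈ A, ∀ y ∈ A, (∀ i < n, x i = y i) → x = y) :
    (P τ n).ncard + A.card ≤ (P τ (n + 1)).ncard := by
  classical
  have he : ∀ w : List Bool, ∃ c, w ∈ substLang τ → w ++ [c] ∈ substLang τ := by
    intro w
    by_cases h : w ∈ substLang τ
    · obtain ⟨c, c', h'⟩ := hext w h
      exact ⟨c', fun _ => lang_infix h' (List.suffix_cons c _).isInfix⟩
    · exact ⟨true, fun h' => absurd h' h⟩
  choose c hc using he
  let e : List Bool → List Bool := fun w => w ++ [c w]
  let g : (ℕ → Bool) → List Bool := fun x => lw x n ++ [!c (lw x n)]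
  have h1 : (e '' P τ n).ncard = (P τ n).ncard := by
    apply Set.ncard_image_of_injOn
    intro a _ b _ h
    exact (List.append_inj' h rfl).1
  have h2 : (g '' (A : Set (ℕ → Bool))).ncard = A.card := by
    rw [Set.ncard_image_of_injOn, Set.ncard_coe_finset]
    intro x hx y hy h
    exact hn x hx y hy (lw_inj (List.append_inj' h rfl).1)
  have hd : Disjoint (e '' P τ n) (g '' (A : Set (ℕ → Bool))) := by
    rw [Set.disjoint_left]
    rintro _ ⟨w, hw, rfl⟩ ⟨x, hx, h⟩
    obtain ⟨h3, h4⟩ := List.append_inj' h rfl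
    rw [h3] at h4
    simp at h4
  rw [← h1, ← h2, ← Set.ncard_union_eq hd ((P_finite n).image _) (A.finite_toSet.image _)]
  apply Set.ncard_le_ncard _ (P_finite _)
  rintro _ (⟨w, hw, rfl⟩ | ⟨x, hx, rfl⟩)
  · exact ⟨hc w hw.1, by simp [e, hw.2]⟩
  · refine ⟨?_, by simp [g, lw_length]⟩
    have := hA x hx (!c (lw x n)) (n + 1)
    rwa [lw_cons] at this

lemma RS_finite (hL : ∀ s, (τ s).length = L) (h2 : 2 ≤ L)
    (hext : ∀ w ∈ substLang τ, ∃ c c' : Bool, c :: w ++ [c'] ∈ substLang τ) :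
    {x | RS τ x}.Finite := by
  by_contra hinf
  obtain ⟨A, hA, hcard⟩ := (Set.not_finite.1 hinf : Set.Infinite _).exists_subset_card_eq 5
  have hev : ∀ᶠ n in Filter.atTop, ∀ x ∈ A, ∀ y ∈ A, (∀ i < n, x i = y i) → x = y := by
    rw [Filter.eventually_all_finset]
    intro x _
    rw [Filter.eventually_all_finset]
    intro y _
    by_cases h : x = y
    · exact Filter.Eventually.of_forall fun _ _ => h
    · obtain ⟨i, hi⟩ := Function.ne_iff.1 h
      filter_upwards [Filter.eventually_gt_atTop i] with n hn hh
      exact absurd (hh i hn) hi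
  obtain ⟨n0, hn0⟩ := Filter.eventually_atTop.1 hev
  have hlow : ∀ m, 5 * m ≤ (P τ (n0 + m)).ncard := by
    intro m
    induction m with
    | zero => simp
    | succ m ih =>
      have := P_step hext A (fun x hx => hA hx) (n0 + m) (hn0 _ (by omega))
      rw [hcard] at this
      rw [← add_assoc]; omega
  have hk : 5 * n0 + 1 < L ^ (5 * n0 + 1) := Nat.lt_pow_self (by omega)
  have h3 := P_upper hL h2 (5 * n0 + 1)
  have h4 := hlow (L ^ (5 * n0 + 1) - n0)
  rw [Nat.add_sub_cancel' (by omega)] at h4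
  omega

lemma two_le (hL : ∀ s, (τ s).length = L)
    (hprim : ∃ n : ℕ, ∀ s s' : Bool, s' ∈ substIter τ n s) :
    2 ≤ L := by
  obtain ⟨M, hM⟩ := hprim
  by_contra h
  have hl := length_substIter hL M true
  have : L ^ M ≤ 1 := pow_le_one₀ (by omega) (by omega)
  have h1 := hM true true
  have h2 := hM true false
  rcases hh : substIter τ M true with _ | ⟨a, _ | ⟨b, t⟩⟩
  · simp [hh] at h1
  · simp [hh] at h1 h2; simp_all
  · rw [hh] at hl; simp at hl; omega

lemma extend (hL : ∀ s, (τ s).length = L)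
    (hprim : ∃ n : ℕ, ∀ s s' : Bool, s' ∈ substIter τ n s) :
    ∀ w ∈ substLang τ, ∃ c c' : Bool, c :: w ++ [c'] ∈ substLang τ := by
  have h2 := two_le hL hprim
  obtain ⟨M, hM⟩ := hprim
  rintro w ⟨n, s, α, β, h⟩
  have hpos : ∀ k t, substIter τ k t ≠ [] := by
    intro k t h0
    have := length_substIter hL k t
    rw [h0] at this
    have := Nat.one_le_pow k L (by omega)
    simp at *; omega
  have hl := length_substIter hL 2 true
  have h4 : 4 ≤ L ^ 2 := by nlinarith
  rcases hh : substIter τ 2 true with _ | ⟨a, _ | ⟨b, _ | ⟨c, t⟩⟩⟩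
  · rw [hh] at hl; simp at hl; omega
  · rw [hh] at hl; simp at hl; omega
  · rw [hh] at hl; simp at hl; omega
  obtain ⟨u, v, huv⟩ := List.append_of_mem (hM b s)
  have key : substIter τ (2 + M + n) true =
      ((substIter τ M a).flatMap (substIter τ n) ++ u.flatMap (substIter τ n) ++ α) ++ w ++
      (β ++ v.flatMap (substIter τ n) ++ (substIter τ M c).flatMap (substIter τ n) ++
        (t.flatMap (substIter τ M)).flatMap (substIter τ n)) := by
    rw [substIter_add, substIter_add, hh]
    simp [List.flatMap_cons, huv, ← h]
  rw [← substIter_add, ← substIter_add] at key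
  generalize hp : substIter τ (M + n) a ++ u.flatMap (substIter τ n) ++ α = p at key
  generalize hq : β ++ v.flatMap (substIter τ n) ++ substIter τ (M + n) c ++
        (t.flatMap (substIter τ M)).flatMap (substIter τ n) = r at key
  have hp0 : p ≠ [] := by rintro rfl; simp [hpos] at hp
  have hq0 : r ≠ [] := by rintro rfl; simp [hpos] at hq
  obtain ⟨p', d, rfl⟩ := List.eq_nil_or_concat p |>.resolve_left hp0
  obtain ⟨d', r', rfl⟩ := List.exists_cons_of_ne_nil hq0
  refine ⟨d, d', 2 + M + n, true, p', r', ?_⟩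
  rw [key]; simp

lemma extendN (hext : ∀ w ∈ substLang τ, ∃ c c' : Bool, c :: w ++ [c'] ∈ substLang τ)
    {w : List Bool} (hw : w ∈ substLang τ) (N : ℕ) :
    ∃ α β : List Bool, α.length = N ∧ β.length = N ∧ α ++ w ++ β ∈ substLang τ := by
  induction N with
  | zero => exact ⟨[], [], rfl, rfl, by simpa using hw⟩
  | succ N ih =>
    obtain ⟨α, β, h1, h2, h⟩ := ih
    obtain ⟨c, c', h'⟩ := hext _ h
    exact ⟨c :: α, β ++ [c'], by simp [h1], by simp [h2], by simpa using h'⟩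

lemma zw_closed (i : ℤ) (n : ℕ) (K : Set (List Bool)) : IsClosed {x : ℤ → Bool | zw x i n ∈ K} := by
  have hc : Continuous fun (x : ℤ → Bool) (j : Fin n) => x (i + j.val) := by fun_prop
  exact (isClosed_discrete {f : Fin n → Bool | List.ofFn f ∈ K}).preimage hc

lemma zw_of_list (l : List Bool) (i : ℤ) :
    zw (fun t => l.getD (t - i).toNat false) i l.length = l := by
  apply List.ext_getElem
  · simp [zw]
  · intro k h1 h2
    simp [zw, h2]

lemma lang_eq (hext : ∀ w ∈ substLang τ, ∃ c c' : Bool, c :: w ++ [c'] ∈ substLang τ) :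
    langZ (substShift τ) = substLang τ := by
  apply Set.Subset.antisymm
  · rintro w ⟨x, hx, hw⟩
    exact hx w hw
  · intro w hw
    let C : ℕ → Set (ℤ → Bool) := fun N =>
      {x | zw x 0 w.length ∈ ({w} : Set (List Bool))} ∩
        {x | zw x (-N) (N + w.length + N) ∈ substLang τ}
    have hcl : ∀ N, IsClosed (C N) := fun N => (zw_closed _ _ _).inter (zw_closed _ _ _)
    obtain ⟨x, hx⟩ := IsCompact.nonempty_iInter_of_sequence_nonempty_isCompact_isClosed C
      (by
        rintro N x ⟨h1, h2⟩
        refine ⟨h1, lang_infix h2 (zw_infix _ _ _ _ _ (by push_cast; omega) (by push_cast; omega))⟩)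
      (by
        intro N
        obtain ⟨α, β, h1, h2, h⟩ := extendN hext hw N
        have e := zw_of_list (α ++ w ++ β) (-N)
        rw [show (α ++ w ++ β).length = N + w.length + N by simp [h1, h2]; omega] at e
        refine ⟨fun t => (α ++ w ++ β).getD (t - -(N : ℤ)).toNat false, ?_, ?_⟩
        rotate_left
        · show zw _ _ _ ∈ substLang τ
          rw [e]; exact h
        · show zw _ _ _ = _
          rw [zw_add, zw_add] at e
          have := (List.append_inj (List.append_inj e (by simp [zw_length, h1])).1
            (by simp [zw_length, h1])).2
          rwa [neg_add_cancel] at this)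
      (hcl 0).isCompact hcl
    rw [Set.mem_iInter] at hx
    refine ⟨x, ?_, (occursZ_iff _ _).2 ⟨0, w.length, ((hx 0).1).symm⟩⟩
    intro v hv
    obtain ⟨i, n, rfl⟩ := (occursZ_iff _ _).1 hv
    exact lang_infix (hx (i.natAbs + n)).2 (zw_infix _ _ _ _ _ (by omega) (by omega))

lemma lw_closed (n : ℕ) (K : Set (List Bool)) : IsClosed {x : ℕ → Bool | lw x n ∈ K} := by
  have hc : ∀ n, Continuous fun (x : ℕ → Bool) (j : Fin n) => x j.val := by intro n; fun_prop
  have : ∀ x, lw x n = (List.ofFn (fun j : Fin n => x j.val)).reverse := by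
    intro x
    apply List.ext_getElem
    · simp [lw_length]
    · intro i h1 h2; rw [lw_get]; simp
  simp_rw [this]
  exact (isClosed_discrete {f : Fin n → Bool | (List.ofFn f).reverse ∈ K}).preimage (hc n)

/-- left-infinite limit of branching words -/
lemma branch_limit (e : ℕ) (h : ∀ k, ∃ v : List Bool, v.length = k ∧ ∀ b, ∃ u : List Bool,
    u.length = e ∧ ∀ c, v ++ b :: u ++ [c] ∈ substLang τ) :
    ∃ y z : ℕ → Bool, RS τ y ∧ RS τ z ∧ y e = false ∧ z e = true ∧
      ∀ i, y (e + 1 + i) = z (e + 1 + i) := by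
  let C : ℕ → Set ((ℕ → Bool) × (ℕ → Bool)) := fun k =>
    {p | p.1 e = false} ∩ ({p | p.2 e = true} ∩ ({p | ∀ i, p.1 (e + 1 + i) = p.2 (e + 1 + i)} ∩
      ({p | lw p.1 k ∈ {w | ∀ c, w ++ [c] ∈ substLang τ}} ∩
        {p | lw p.2 k ∈ {w | ∀ c, w ++ [c] ∈ substLang τ}})))
  have hcl : ∀ k, IsClosed (C k) := by
    intro k
    refine IsClosed.inter ?_ (IsClosed.inter ?_ (IsClosed.inter ?_ (IsClosed.inter ?_ ?_)))
    · exact isClosed_eq (by fun_prop) (by fun_prop)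
    · exact isClosed_eq (by fun_prop) (by fun_prop)
    · simp only [Set.ofPred_forall]
      exact isClosed_iInter fun i => isClosed_eq (by fun_prop) (by fun_prop)
    · exact (lw_closed k {w | ∀ c, w ++ [c] ∈ substLang τ}).preimage continuous_fst
    · exact (lw_closed k {w | ∀ c, w ++ [c] ∈ substLang τ}).preimage continuous_snd
  have hstep : ∀ (x : ℕ → Bool) (m n : ℕ), m ≤ n → (∀ c, lw x n ++ [c] ∈ substLang τ) →
      ∀ c, lw x m ++ [c] ∈ substLang τ := by
    intro x m n hmn h c
    refine lang_infix (h c) ?_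
    rw [← lw_cons, ← lw_cons]
    exact lw_suffix _ (by omega)
  obtain ⟨⟨y, z⟩, hx⟩ := IsCompact.nonempty_iInter_of_sequence_nonempty_isCompact_isClosed C
    (by
      rintro k p ⟨h1, h2, h3, h4, h5⟩
      exact ⟨h1, h2, h3, hstep _ _ _ (by omega) h4, hstep _ _ _ (by omega) h5⟩)
    (by
      intro k
      obtain ⟨v, hv, hb⟩ := h k
      choose u hu hc using hb
      let B : Bool → ℕ → Bool := fun b => appL (appL (fun _ => false) v) (b :: u b)
      have hB : ∀ b, B b e = b := by
        intro b
        have := appL_ge (u b) (cons b (appL (fun _ => false) v)) 0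
        rw [hu] at this
        exact this
      have hB' : ∀ b i, B b (e + 1 + i) = appL (fun _ => false) v i := by
        intro b i
        have := appL_ge (b :: u b) (appL (fun _ => false) v) i
        rw [List.length_cons, hu] at this
        exact this
      have hBw : ∀ b, lw (B b) (k + (e + 1)) = v ++ b :: u b := by
        intro b
        have := lw_appL (b :: u b) (appL (fun _ => false) v) k
        have h' := lw_appL v (fun _ => false) 0
        rw [zero_add, hv] at h'
        rw [List.length_cons, hu, h'] at this
        simpa [lw] using this
      refine ⟨(B false, B true), hB _, hB _, fun i => by simp only [hB'], ?_, ?_⟩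
      · exact hstep _ _ (k + (e + 1)) (by omega) (by rw [hBw]; exact hc _)
      · exact hstep _ _ (k + (e + 1)) (by omega) (by rw [hBw]; exact hc _))
    (hcl 0).isCompact hcl
  rw [Set.mem_iInter] at hx
  have hrs : ∀ x : ℕ → Bool, (∀ k, ∀ c, lw x k ++ [c] ∈ substLang τ) → RS τ x := by
    intro x h c n
    have := h n c
    rw [← lw_cons] at this
    exact lang_infix this (lw_suffix _ (by omega))
  exact ⟨y, z, hrs _ fun k => (hx k).2.2.2.1, hrs _ fun k => (hx k).2.2.2.2, (hx 0).1, (hx 0).2.1,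
    (hx 0).2.2.1⟩

lemma no_left_periodic
    (haper : ∀ x ∈ substShift τ, ∀ p : ℕ, 1 ≤ p → (fun i => x (i + (p : ℤ))) ≠ x)
    (x : ℕ → Bool) (hx : InL τ x) (d : ℕ) (hd : 1 ≤ d) (h : ∀ i, x (i + d) = x i) : False := by
  have hp : Function.Periodic x d := h
  refine no_periodic haper (fun t => x ((-t - 1) % d).toNat) d hd ?_ fun n => ⟨-n, ?_⟩
  · intro t
    show x _ = x _
    rw [show -(t + (d : ℤ)) - 1 = (-t - 1) - d by ring, Int.sub_emod_right]
  · have : zw (fun t => x ((-t - 1) % d).toNat) (-n) n = lw x n := by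
      apply List.ext_getElem
      · simp [zw_length, lw_length]
      · intro i h1 h2
        rw [lw_length] at h2
        rw [lw_get]
        simp only [zw, List.getElem_ofFn]
        rw [show (-(-(n : ℤ) + (i : ℕ)) - 1) = ((n - 1 - i : ℕ) : ℤ) by omega, ← Int.natCast_mod,
          Int.toNat_natCast, hp.map_mod_nat]
    rw [this]; exact hx n

lemma no_branch (D : Dat τ L q)
    (haper : ∀ x ∈ substShift τ, ∀ p : ℕ, 1 ≤ p → (fun i => x (i + (p : ℤ))) ≠ x)
    (hfin : {x | RS τ x}.Finite) (e : ℕ) (y z : ℕ → Bool) (hy : RS τ y) (hz : RS τ z)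
    (hye : y e = false) (hze : z e = true) (hyz : ∀ i, y (e + 1 + i) = z (e + 1 + i)) : False := by
  let x : ℕ → Bool := fun i => y (i + (e + 1))
  have hxz : x = fun i => z (i + (e + 1)) := by
    funext i
    have := hyz i
    simp only [x]
    rwa [add_comm i]
  have hx : RS τ x := by
    intro c
    cases c
    · have := hy.inL.drop e
      convert this using 1
      funext i
      cases i with
      | zero => simp [cons, hye]
      | succ i => simp only [cons, x]; congr 1; omega
    · have := hz.inL.drop e
      convert this using 1
      funext i
      cases i with
      | zero => simp [cons, hze]
      | succ i => rw [hxz]; simp only [cons]; congr 1; omega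
  have : Finite {x // RS τ x} := hfin
  let G : {x // RS τ x} → {x // RS τ x} := fun x => ⟨F τ L q x.1, D.RS_F x.2⟩
  have hG : Function.Injective G := by
    intro a b h
    exact Subtype.ext (D.F_inj (congrArg Subtype.val h))
  have hit : ∀ N (a : {x // RS τ x}), (G^[N] a).1 = (F τ L q)^[N] a.1 := by
    intro N a
    induction N with
    | zero => rfl
    | succ N ih => rw [Function.iterate_succ_apply', Function.iterate_succ_apply', ← ih]
  have hper : ∀ a (ha : RS τ a), ∃ N, 1 ≤ N ∧ Function.IsPeriodicPt (F τ L q) N a := by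
    intro a ha
    obtain ⟨N, hN, h⟩ := hG.mem_periodicPts ⟨a, ha⟩
    refine ⟨N, hN, ?_⟩
    have := congrArg Subtype.val h
    rw [hit] at this
    exact this
  obtain ⟨N1, p1, h1⟩ := hper x hx
  obtain ⟨N2, p2, h2⟩ := hper y hy
  obtain ⟨N3, p3, h3⟩ := hper z hz
  have q1 : (F τ L q)^[N1 * N2 * N3] x = x := (h1.mul_const N2).mul_const N3
  have q2 : (F τ L q)^[N1 * N2 * N3] y = y := (h2.const_mul N1).mul_const N3
  have q3 : (F τ L q)^[N1 * N2 * N3] z = z := h3.const_mul (N1 * N2)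
  rcases D.three (Nat.mul_pos (Nat.mul_pos p1 p2) p3) q1 q2 q3 with h | h | h
  · exact no_left_periodic haper y hy.inL (e + 1) (by omega) fun i => congrFun h i
  · rw [hxz] at h
    exact no_left_periodic haper z hz.inL (e + 1) (by omega) fun i => congrFun h i
  · rw [h, hze] at hye; cases hye

lemma exists_dat (hL : ∀ s, (τ s).length = L)
    (hprim : ∃ n : ℕ, ∀ s s' : Bool, s' ∈ substIter τ n s)
    (haper : ∀ x ∈ substShift τ, ∀ p : ℕ, 1 ≤ p → (fun i => x (i + (p : ℤ))) ≠ x) :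
    ∃ q, Dat τ L q := by
  classical
  have h2 := two_le hL hprim
  by_cases h : ∃ i, (τ true).getD i false ≠ (τ false).getD i false
  · refine ⟨Nat.find h, hL, h2, ?_, fun i hi => not_not.1 (Nat.find_min h hi), Nat.find_spec h⟩
    by_contra hc
    apply Nat.find_spec h
    rw [List.getD_eq_default _ _ (by rw [hL]; omega), List.getD_eq_default _ _ (by rw [hL]; omega)]
  · exfalso
    push Not at h
    let x : ℕ → Bool := T τ L fun _ => false
    have hT : ∀ y, T τ L y = x := by
      intro y
      funext i
      simp only [x, T]
      cases y (i / L)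
      · rfl
      · exact h _
    refine no_left_periodic haper x ?_ L (by omega) ?_
    · intro n
      have hm : substIter τ n true ∈ substLang τ := ⟨n, true, List.infix_rfl⟩
      have hlen := length_substIter hL n true
      have e := lw_appL (substIter τ n true) (fun _ => false) 0
      rw [zero_add, hlen] at e
      have e2 := lang_subst hm
      rw [show substIter τ n true = lw (appL (fun _ => false) (substIter τ n true)) (L ^ n) by
        rw [e]; simp [lw], ← lw_T hL, hT] at e2
      refine lang_infix e2 (lw_suffix _ ?_)
      have := Nat.lt_pow_self (n := n) (show 1 < L by omega)
      nlinarith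
    · intro i
      simp only [x, T]
      rw [Nat.add_mod_right]

lemma right_special
    (hext : ∀ w ∈ substLang τ, ∃ c c' : Bool, c :: w ++ [c'] ∈ substLang τ)
    (haper : ∀ x ∈ substShift τ, ∀ p : ℕ, 1 ≤ p → (fun i => x (i + (p : ℤ))) ≠ x) (k : ℕ) :
    ∃ w : List Bool, w.length = k ∧ ∀ c, w ++ [c] ∈ substLang τ := by
  by_contra! hno
  have h0 : ([true] : List Bool) ∈ langZ (substShift τ) := by
    rw [lang_eq hext]; exact ⟨0, true, List.infix_rfl⟩
  obtain ⟨x, hx, -⟩ := h0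
  have hw : ∀ i n, zw x i n ∈ substLang τ := fun i n => hx _ (occursZ_zw x i n)
  have huniq : ∀ i j, zw x i k = zw x j k → x (i + k) = x (j + k) := by
    intro i j h
    obtain ⟨c, hc⟩ := hno (zw x i k) (zw_length _ _ _)
    have h1 := hw i (k + 1)
    have h2 := hw j (k + 1)
    rw [zw_add, zw_one] at h1 h2
    rw [← h] at h2
    have a1 : x (i + k) ≠ c := by rintro rfl; exact hc h1
    have a2 : x (j + k) ≠ c := by rintro rfl; exact hc h2
    revert a1 a2
    generalize x (i + k) = u
    generalize x (j + k) = v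
    clear hc
    revert u v c; decide
  obtain ⟨i, j, hij, he⟩ : ∃ i j : ℕ, i < j ∧ zw x i k = zw x j k := by
    have : Finite {v : List Bool // v.length = k} := List.finite_length_eq Bool k
    obtain ⟨i, j, hne, he⟩ := Finite.exists_ne_map_eq_of_infinite
      (fun i : ℕ => (⟨zw x i k, zw_length _ _ _⟩ : {v : List Bool // v.length = k}))
    have he := congrArg Subtype.val he
    rcases lt_or_gt_of_ne hne with h | h
    · exact ⟨i, j, h, he⟩
    · exact ⟨j, i, h, he.symm⟩
  have hall : ∀ n : ℕ, zw x (i + n) k = zw x (j + n) k := by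
    intro n
    induction n with
    | zero => simpa using he
    | succ n ih =>
      have e1 : zw x (i + n) (k + 1) = zw x (j + n) (k + 1) := by
        rw [zw_add, zw_add, ih, zw_one, zw_one, huniq _ _ ih]
      rw [add_comm k 1, zw_add, zw_add] at e1
      have := (List.append_inj e1 (by simp [zw_length])).2
      push_cast
      simpa [add_assoc] using this
  obtain ⟨d, rfl⟩ := Nat.exists_eq_add_of_lt hij
  let y : ℕ → Bool := fun n => x (i + k + n)
  have hy : Function.Periodic y (d + 1) := by
    intro n
    have := huniq _ _ (hall n)
    simp only [y]
    push_cast at this ⊢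
    rw [show (i + k + n : ℤ) = i + n + k by ring, this]
    congr 1; ring
  refine no_periodic haper (fun t => y (t % (d + 1 : ℕ)).toNat) (d + 1) (by omega) ?_
    fun n => ⟨0, ?_⟩
  · intro t
    show y _ = y _
    rw [Int.add_emod_right]
  · have : zw (fun t => y (t % (d + 1 : ℕ)).toNat) 0 n = zw x (i + k) n := by
      unfold zw
      congr 1
      funext m
      show y ((0 + (m.val : ℤ)) % (d + 1 : ℕ)).toNat = y m.val
      rw [zero_add, ← Int.natCast_mod, Int.toNat_natCast, hy.map_mod_nat]
    rw [this]; exact hw _ _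

lemma right_extend (hext : ∀ w ∈ substLang τ, ∃ c c' : Bool, c :: w ++ [c'] ∈ substLang τ)
    {w : List Bool} (hw : w ∈ substLang τ) (N : ℕ) :
    ∃ β : List Bool, β.length = N ∧ w ++ β ∈ substLang τ := by
  obtain ⟨α, β, _, h2, h⟩ := extendN hext hw N
  refine ⟨β, h2, lang_infix h ?_⟩
  rw [List.append_assoc]; exact (List.suffix_append _ _).isInfix

lemma upper (D : Dat τ L q)
    (hext : ∀ w ∈ substLang τ, ∃ c c' : Bool, c :: w ++ [c'] ∈ substLang τ)
    (haper : ∀ x ∈ substShift τ, ∀ p : ℕ, 1 ≤ p → (fun i => x (i + (p : ℤ))) ≠ x)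
    (a : ℤ → Bool) (ha : a ∈ WShiftZ (substShift τ)) (i j : ℤ) (hi : a i = true) (hj : a j = true)
    (hij : i < j) : False := by
  obtain ⟨e, he⟩ := Int.le.dest (Int.add_one_le_of_lt hij)
  obtain ⟨y, z, hy, hz, h1, h2, h3⟩ := branch_limit (τ := τ) e (by
    intro k
    have := ha _ (occursZ_zw a (i - k) (k + (1 + (e + 1))))
    rw [mem_Wset, lang_eq hext, zw_add] at this
    obtain ⟨v, hv, hw⟩ := this.exists_append
    rw [zw_length] at hv
    rw [sub_add_cancel, zw_add, zw_one, hi, zw_add, zw_one] at hw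
    refine ⟨v, hv, fun b => ?_⟩
    obtain ⟨u, hu, hw'⟩ := Win.exists_append (l := zw a (i + (1 : ℕ)) e) (hw b)
    rw [zw_length] at hu
    refine ⟨u, hu, fun c => ?_⟩
    rw [show (i + ((1 : ℕ) : ℤ) + e) = j by push_cast; exact he, hj] at hw'
    have := hw' c
    simpa [Win] using this)
  exact no_branch D haper (RS_finite D.hL D.h2 hext) e y z hy hz h1 h2 h3

lemma lower (hext : ∀ w ∈ substLang τ, ∃ c c' : Bool, c :: w ++ [c'] ∈ substLang τ)
    (haper : ∀ x ∈ substShift τ, ∀ p : ℕ, 1 ≤ p → (fun i => x (i + (p : ℤ))) ≠ x)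
    (a : ℤ → Bool) (ha : ∀ i j : ℤ, a i = true → a j = true → i = j) :
    a ∈ WShiftZ (substShift τ) := by
  intro w hw
  obtain ⟨i, n, rfl⟩ := (occursZ_iff _ _).1 hw
  rw [mem_Wset, lang_eq hext]
  have hnot : ∀ (s : ℤ) (m : ℕ), (∀ t : ℕ, t < m → a (s + t) ≠ true) → true ∉ zw a s m := by
    intro s m h hm
    simp only [zw, List.mem_ofFn] at hm
    obtain ⟨t, ht⟩ := hm
    exact h t t.2 ht
  by_cases h : ∃ t : ℕ, t < n ∧ a (i + t) = true
  · obtain ⟨t, htn, ht⟩ := h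
    obtain ⟨m, rfl⟩ := Nat.exists_eq_add_of_lt htn
    rw [show t + m + 1 = t + (1 + m) by ring, zw_add, zw_add, zw_one, ht]
    obtain ⟨v, hv, hc⟩ := right_special hext haper t
    refine win_append (v := v) (hnot _ _ ?_) (by rw [hv, zw_length]) ?_
    · intro s hs h'
      have := ha _ _ ht h'
      omega
    · intro c
      obtain ⟨β, hβ, hl⟩ := right_extend hext (hc c) m
      show Win _ (zw a _ m) _
      rw [List.nil_append, ← List.append_nil (zw a _ m)]
      refine win_append (v := β) (hnot _ _ ?_) (by rw [hβ, zw_length]) ?_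
      · intro s hs h'
        have := ha _ _ ht h'
        push_cast at this
        omega
      · exact hl
  · push Not at h
    obtain ⟨v, hv, hl⟩ := right_extend hext (w := []) ⟨0, true, List.nil_infix⟩ n
    rw [← List.append_nil (zw a i n)]
    exact win_append (v := v) (hnot _ _ h) (by rw [hv, zw_length]) hl

end WinProof

/-- The two-directional subshift of a primitive uniform aperiodic
substitution on `{0,1}` has winning shift consisting exactly of the configurations
with at most one occurrence of the letter `B`. -/
theorem winningShift_of_primitive_uniform_aperiodic_substitution
    (τ : Bool → List Bool)
    (huniform : (τ false).length = (τ true).length)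
    (hprim : ∃ n : ℕ, ∀ s s' : Bool, s' ∈ substIter τ n s)
    (haper : ∀ x ∈ substShift τ, ∀ p : ℕ, 1 ≤ p → (fun i => x (i + (p : ℤ))) ≠ x) :
    WShiftZ (substShift τ) =
      { a : ℤ → Bool | ∀ i j : ℤ, a i = true → a j = true → i = j } := by
  have hL : ∀ s, (τ s).length = (τ true).length := by
    intro s; cases s
    · exact huniform
    · rfl
  obtain ⟨q, D⟩ := WinProof.exists_dat hL hprim haper
  have hext := WinProof.extend hL hprim
  ext a
  constructor
  · intro ha i j hi hj
    rcases lt_trichotomy i j with h | h | h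
    · exact (WinProof.upper D hext haper a ha i j hi hj h).elim
    · exact h
    · exact (WinProof.upper D hext haper a ha j i hj hi h).elim
  · intro ha
    exact WinProof.lower hext haper a ha
end

section
/- If X ⊆ {0,1}^ℕ is a binary one-directional subshift, then h(X) = h(W(X)). -/
/-- The set `B_n(X)` of words of length `n` in the language of `X ⊆ S^ℕ`. -/
def langNn {S : Type*} (X : Set (ℕ → S)) (n : ℕ) : Set (List S) :=
  { w | w ∈ langN X ∧ w.length = n }

/-- The entropy `h(X) = lim_n (1/n) log₂ |B_n(X)|` of a subshift `X ⊆ S^ℕ`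
(stated via `limsup`; for subshifts the limit exists by subadditivity). -/
noncomputable def entropy {S : Type*} (X : Set (ℕ → S)) : ℝ :=
  Filter.atTop.limsup fun n : ℕ => Real.logb 2 ((langNn X n).ncard : ℝ) / (n : ℝ)


/-- Prepend a letter. -/
def consN (c : Bool) (x : ℕ → Bool) : ℕ → Bool
  | 0 => c
  | n + 1 => x n

/-- The follower set of a letter. -/
def folN (X : Set (ℕ → Bool)) (c : Bool) : Set (ℕ → Bool) := { y | consN c y ∈ X }

/-- `w` is a prefix of a point of `X`. -/
def PW : List Bool → Set (ℕ → Bool) → Prop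
  | [], X => X.Nonempty
  | c :: r, X => PW r (folN X c)

/-- `A` wins the finite game with the prefixes of `X` as target. -/
def FW : List Bool → Set (ℕ → Bool) → Prop
  | [], X => X.Nonempty
  | true :: r, X => FW r (folN X false) ∧ FW r (folN X true)
  | false :: r, X => FW r (folN X false) ∨ FW r (folN X true)

theorem consN_shift (x : ℕ → Bool) : consN (x 0) (shiftN x) = x := by
  funext n; cases n <;> rfl

theorem shift_consN (c : Bool) (x : ℕ → Bool) : shiftN (consN c x) = x := rfl

theorem PW_iff (w : List Bool) : ∀ X : Set (ℕ → Bool),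
    PW w X ↔ ∃ x ∈ X, w = List.ofFn fun j : Fin w.length => x j.val := by
  induction w with
  | nil => intro X; simp [PW, Set.Nonempty]
  | cons c r ih =>
    intro X
    simp only [PW, ih]
    constructor
    · rintro ⟨x, hx, h⟩
      refine ⟨consN c x, hx, ?_⟩
      simp only [List.length_cons, List.ofFn_succ]
      exact congrArg (List.cons c) h
    · rintro ⟨x, hx, h⟩
      simp only [List.length_cons, List.ofFn_succ, List.cons.injEq] at h
      refine ⟨shiftN x, ?_, h.2⟩
      have h1 : c = x 0 := h.1
      show consN c (shiftN x) ∈ X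
      rw [h1, consN_shift]; exact hx

theorem langNn_eq (X : Set (ℕ → Bool)) (hX : ∀ x ∈ X, shiftN x ∈ X) (n : ℕ) :
    langNn X n = { w | w.length = n ∧ PW w X } := by
  ext w
  simp only [langNn, langN, Set.mem_ofPred_eq, PW_iff]
  constructor
  · rintro ⟨⟨x, hx, i, h⟩, hn⟩
    refine ⟨hn, fun j => x (i + j), ?_, h⟩
    clear h
    induction i with
    | zero => simpa using hx
    | succ i ih =>
      have := hX _ ih
      convert this using 1
      funext j
      simp only [shiftN]
      congr 1; omega
  · rintro ⟨hn, x, hx, h⟩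
    refine ⟨⟨x, hx, 0, ?_⟩, hn⟩
    simpa using h

theorem finite_len (n : ℕ) (P : List Bool → Prop) :
    { w : List Bool | w.length = n ∧ P w }.Finite :=
  (List.finite_length_eq Bool n).subset fun _ h => h.1

theorem ncard_split (n : ℕ) (P : List Bool → Prop) :
    { w : List Bool | w.length = n + 1 ∧ P w }.ncard =
      { w : List Bool | w.length = n ∧ P (false :: w) }.ncard +
      { w : List Bool | w.length = n ∧ P (true :: w) }.ncard := by
  have h : { w : List Bool | w.length = n + 1 ∧ P w } =
      (Set.image (List.cons false) { w : List Bool | w.length = n ∧ P (false :: w) }) ∪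
      (Set.image (List.cons true) { w : List Bool | w.length = n ∧ P (true :: w) }) := by
    ext w
    rcases w with _ | ⟨_ | _, w⟩ <;> simp
  rw [h, Set.ncard_union_eq ?_ ((finite_len _ _).image _) ((finite_len _ _).image _), Set.ncard_image_of_injective _ List.cons_injective,
    Set.ncard_image_of_injective _ List.cons_injective]
  · rw [Set.disjoint_left]
    rintro _ ⟨a, _, rfl⟩ ⟨b, _, h⟩
    simp at h

theorem count_eq (n : ℕ) : ∀ X : Set (ℕ → Bool),
    { w : List Bool | w.length = n ∧ PW w X }.ncard =
    { w : List Bool | w.length = n ∧ FW w X }.ncard := by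
  induction n with
  | zero =>
    intro X
    congr 1
    ext w
    simp only [Set.mem_ofPred_eq, List.length_eq_zero_iff]
    constructor <;> (rintro ⟨rfl, h⟩; exact ⟨rfl, h⟩)
  | succ n ih =>
    intro X
    rw [ncard_split, ncard_split]
    simp only [PW, FW]
    rw [ih, ih, ← Set.ncard_union_add_ncard_inter _ _ (finite_len _ _) (finite_len _ _)]
    congr 2
    · ext w; simp only [Set.mem_union, Set.mem_ofPred_eq]; tauto
    · ext w; simp only [Set.mem_inter_iff, Set.mem_ofPred_eq]; tauto

theorem playPref_succ (sA sB : List Bool → Bool) (a : ℕ → Bool) (c : Bool)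
    (hc : c = (if a 0 then sB else sA) []) (n : ℕ) :
    playPref sA sB a (n + 1) =
      c :: playPref (fun w => sA (c :: w)) (fun w => sB (c :: w)) (shiftN a) n := by
  induction n with
  | zero => simp [playPref, hc]
  | succ n ih =>
    rw [playPref, ih]
    simp only [playPref, shiftN, List.cons_append]
    congr 3
    split <;> simp [*]

theorem playInf_eq (sA sB : List Bool → Bool) (a : ℕ → Bool) (c : Bool)
    (hc : c = (if a 0 then sB else sA) []) :
    playInf sA sB a =
      consN c (playInf (fun w => sA (c :: w)) (fun w => sB (c :: w)) (shiftN a)) := by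
  funext n
  cases n with
  | zero => simp [playInf, consN, hc, playPref]
  | succ n =>
    simp only [playInf, consN, playPref_succ sA sB a c hc, shiftN]
    split <;> simp [*]

/-- Prescribe the first letter, then follow a strategy depending on the first letter. -/
def joinS (c : Bool) (s : Bool → List Bool → Bool) : List Bool → Bool
  | [] => c
  | d :: t => s d t

theorem WShift_true (X : Set (ℕ → Bool)) (a : ℕ → Bool) (ha : a 0 = true) :
    a ∈ WShift X ↔ ∀ c, shiftN a ∈ WShift (folN X c) := by
  constructor
  · rintro ⟨sA, h⟩ c
    refine ⟨fun w => sA (c :: w), fun sB => ?_⟩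
    have := h (joinS c fun _ => sB)
    rw [playInf_eq _ _ a c (by simp [ha, joinS])] at this
    exact this
  · intro h
    choose s hs using h
    refine ⟨joinS false s, fun sB => ?_⟩
    rw [playInf_eq _ _ a (sB []) (by simp [ha])]
    exact hs (sB []) _

theorem WShift_false (X : Set (ℕ → Bool)) (a : ℕ → Bool) (ha : a 0 = false) :
    a ∈ WShift X ↔ ∃ c, shiftN a ∈ WShift (folN X c) := by
  constructor
  · rintro ⟨sA, h⟩
    refine ⟨sA [], fun w => sA (sA [] :: w), fun sB => ?_⟩
    have := h (joinS false fun _ => sB)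
    rw [playInf_eq _ _ a (sA []) (by simp [ha])] at this
    exact this
  · rintro ⟨c, s, hs⟩
    refine ⟨joinS c fun _ => s, fun sB => ?_⟩
    rw [playInf_eq _ _ a c (by simp [ha, joinS])]
    exact hs _

theorem WShift_shift (X : Set (ℕ → Bool)) (hX : ∀ x ∈ X, shiftN x ∈ X) :
    ∀ a ∈ WShift X, shiftN a ∈ WShift X := by
  intro a h
  have : ∃ c, shiftN a ∈ WShift (folN X c) := by
    cases ha : a 0
    · exact (WShift_false X a ha).1 h
    · exact ⟨false, (WShift_true X a ha).1 h false⟩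
  obtain ⟨c, s, hs⟩ := this
  exact ⟨s, fun sB => hX _ (hs sB)⟩

theorem length_playPref (sA sB : List Bool → Bool) (a : ℕ → Bool) (n : ℕ) :
    (playPref sA sB a n).length = n := by
  induction n with
  | zero => rfl
  | succ n ih => simp [playPref, ih]

theorem PW_of_imp (r : List Bool) (X Y : Set (ℕ → Bool)) (h : X ⊆ Y) (hp : PW r X) :
    PW r Y := by
  rw [PW_iff] at *
  obtain ⟨x, hx, e⟩ := hp
  exact ⟨x, h hx, e⟩

theorem FW_of_mem (w : List Bool) : ∀ X : Set (ℕ → Bool), PW w (WShift X) → FW w X := by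
  induction w with
  | nil =>
    rintro X ⟨a, s, hs⟩
    exact ⟨_, hs s⟩
  | cons b r ih =>
    intro X h
    simp only [PW] at h
    cases b
    · rw [PW_iff] at h
      obtain ⟨x, hx, e⟩ := h
      obtain ⟨c, hc⟩ := (WShift_false X _ rfl).1 hx
      have := ih (folN X c) ((PW_iff _ _).2 ⟨x, hc, e⟩)
      cases c
      · exact Or.inl this
      · exact Or.inr this
    · have key : ∀ c, FW r (folN X c) := fun c =>
        ih _ (PW_of_imp r _ _ (fun x hx => (WShift_true X (consN true x) rfl).1 hx c) h)
      exact ⟨key false, key true⟩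

/-- Extend a finite turn order by `A`'s turns. -/
def extA : List Bool → ℕ → Bool
  | [] => fun _ => false
  | c :: r => consN c (extA r)

theorem extA_mem (w : List Bool) : ∀ X : Set (ℕ → Bool), FW w X → extA w ∈ WShift X := by
  induction w with
  | nil =>
    rintro X ⟨x, hx⟩
    refine ⟨fun w => x w.length, fun sB => ?_⟩
    convert hx using 1
    funext n
    simp [playInf, extA, length_playPref]
  | cons b r ih =>
    intro X h
    cases b
    · refine (WShift_false X _ rfl).2 ?_
      rcases h with h | h
      · exact ⟨_, ih _ h⟩
      · exact ⟨_, ih _ h⟩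
    · refine (WShift_true X _ rfl).2 ?_
      rintro (_ | _)
      · exact ih _ h.1
      · exact ih _ h.2

theorem PW_of_extA (w : List Bool) : ∀ Y : Set (ℕ → Bool), extA w ∈ Y → PW w Y := by
  induction w with
  | nil => intro Y h; exact ⟨_, h⟩
  | cons b r ih => intro Y h; exact ih _ h

theorem PW_WShift (w : List Bool) (X : Set (ℕ → Bool)) : PW w (WShift X) ↔ FW w X :=
  ⟨FW_of_mem w X, fun h => PW_of_extA w _ (extA_mem w X h)⟩

/-- For a binary one-directional subshift `X ⊆ {0,1}^ℕ`,
the entropies of `X` and of its winning shift agree: `h(X) = h(W(X))`. -/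
theorem entropy_eq_entropy_winningShift_binary (X : Set (ℕ → Bool))
    (hXcl : IsClosed X) (hXsh : ∀ x ∈ X, shiftN x ∈ X) :
    entropy X = entropy (WShift X) := by
  unfold entropy
  congr 1
  funext n
  rw [langNn_eq X hXsh, langNn_eq (WShift X) (WShift_shift X hXsh), count_eq]
  simp only [PW_WShift]
end
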